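/- arXiv:0812.0062 — 9 statements merged into one kernel-verified Lean document; each statement's English description precedes it below -/
import Mathlib

section
/- Let Γ be a finite rooted tree and ⤳ a binary relation on its vertex set V satisfying the P-Enriques-diagram conditions (P1), (P2), (P3). Then there exist an integer d ≥ 2 and a d-weighting α of Γ whose induced proximity relation ⤳_α equals ⤳ if and only if the following two conditions hold: (a) the proximity index is non-decreasing, i.e. ind(r) ≥ ind(q) whenever r ⪰ q; and (b) for all vertices r, q with r ⤳ q, at most one child s ∈ r⁺ satisfies ¬(s ⤳ q). (This is the combinatorial form, via the paper's codification of d-dimensional toric constellations by d-weighted trees and the combinatorial proximity criterion, of the theorem: a P-Enriques diagram is induced by a toric constellation if and only if (a) and (b) hold.) -/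
/-- A finite rooted tree: a distinguished root, a parent map fixing the root,
and a depth function witnessing that iterating the parent map reaches the root. -/
structure PTree (V : Type) where
  root : V
  parent : V → V
  depth : V → ℕ
  parent_root : parent root = root
  depth_root : depth root = 0
  depth_eq : ∀ v, v ≠ root → depth v = depth (parent v) + 1

namespace PTree

variable {V : Type}

/-- `r ⪰ q` : the descendancy order (`q` lies on the path from `r` to the root). -/
def desc (T : PTree V) (r q : V) : Prop := ∃ k : ℕ, T.parent^[k] r = q

/-- `r ≻ q`. -/
def sdesc (T : PTree V) (r q : V) : Prop := T.desc r q ∧ r ≠ q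

/-- `r ∈ q⁺` : `r` is a child of `q`. -/
def child (T : PTree V) (r q : V) : Prop := T.parent r = q ∧ r ≠ T.root

/-- `w` is a d-weighting of `T` : each non-root vertex gets a weight in `{1,…,d}`,
and distinct children of a common vertex get distinct weights. -/
def IsWeighting (T : PTree V) (d : ℕ) (w : V → ℕ) : Prop :=
  (∀ v, v ≠ T.root → 1 ≤ w v ∧ w v ≤ d) ∧
    ∀ r s, r ≠ T.root → s ≠ T.root → T.parent r = T.parent s → r ≠ s → w r ≠ w s

/-- The length of the path (code) from `q` up to a descendant `r`. -/
def codeLen (T : PTree V) (r q : V) : ℕ := T.depth r - T.depth q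

/-- The proximity relation induced by a weighting: `r ⤳_α q` iff `r ≻ q` and the first
entry of the code of `r` over `q` differs from all the later entries.  (The `j`-th entry
of the code, `1 ≤ j ≤ k`, is the weight of `parent^[k-j] r`, where `k` is the code length.) -/
def prox (T : PTree V) (w : V → ℕ) (r q : V) : Prop :=
  T.sdesc r q ∧ ∀ i, i + 2 ≤ T.codeLen r q →
    w (T.parent^[T.codeLen r q - 1] r) ≠ w (T.parent^[i] r)

end PTree

/-- The proximity index of `q` : the number of vertices `p` with `q ⤳ p`. -/
noncomputable def ind {V : Type} (rel : V → V → Prop) (q : V) : ℕ :=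
  Nat.card {p : V // rel q p}

/-- `s(q)` : the number of children of `q` whose proximity index exceeds that of `q`. -/
noncomputable def PTree.sInd {V : Type} (T : PTree V) (rel : V → V → Prop) (q : V) : ℕ :=
  Nat.card {r : V // T.child r q ∧ ind rel q < ind rel r}

/-- The P-Enriques-diagram conditions (P1), (P2), (P3) on a binary relation `rel`. -/
def PTree.Enriques {V : Type} (T : PTree V) (rel : V → V → Prop) : Prop :=
  (∀ q p, rel q p → T.sdesc q p) ∧
  (∀ q p, T.child q p → rel q p) ∧
  (∀ r p q, T.desc r p → T.sdesc p q → rel r q → rel p q)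

/-- Condition (a): the proximity index is non-decreasing along the descendancy order. -/
def PTree.CondA {V : Type} (T : PTree V) (rel : V → V → Prop) : Prop :=
  ∀ r q, T.desc r q → ind rel q ≤ ind rel r

/-- Condition (b): whenever `r ⤳ q`, at most one child `s` of `r` satisfies `¬ s ⤳ q`. -/
def PTree.CondB {V : Type} (T : PTree V) (rel : V → V → Prop) : Prop :=
  ∀ r q, rel r q → ∀ s s', T.child s r → T.child s' r → ¬ rel s q → ¬ rel s' q → s = s'

namespace PTree

variable {V : Type}

theorem depth_parent_le (T : PTree V) (v : V) : T.depth (T.parent v) ≤ T.depth v := by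
  by_cases h : v = T.root
  · subst h; rw [T.parent_root]
  · have := T.depth_eq v h; omega

theorem depth_iter_le (T : PTree V) (k : ℕ) (v : V) : T.depth (T.parent^[k] v) ≤ T.depth v := by
  induction k generalizing v with
  | zero => simp
  | succ k ih =>
    rw [Function.iterate_succ_apply]
    exact (ih _).trans (T.depth_parent_le v)

theorem desc_iff (T : PTree V) (s q : V) : T.desc s q ↔ s = q ∨ T.desc (T.parent s) q := by
  constructor
  · rintro ⟨k, hk⟩
    cases k with
    | zero => left; simpa using hk
    | succ k => right; exact ⟨k, by rwa [Function.iterate_succ_apply] at hk⟩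
  · rintro (h | ⟨k, hk⟩)
    · exact ⟨0, by simpa using h⟩
    · exact ⟨k + 1, by rwa [Function.iterate_succ_apply]⟩

theorem desc_depth_le (T : PTree V) {r q : V} (h : T.desc r q) : T.depth q ≤ T.depth r := by
  obtain ⟨k, rfl⟩ := h
  exact T.depth_iter_le k r

theorem iter_root (T : PTree V) (k : ℕ) : T.parent^[k] T.root = T.root :=
  Function.iterate_fixed T.parent_root k

theorem desc_root (T : PTree V) {q : V} (h : T.desc T.root q) : q = T.root := by
  obtain ⟨k, rfl⟩ := h
  exact T.iter_root k

theorem desc_iter (T : PTree V) {r q : V} (h : T.desc r q) :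
    T.parent^[T.depth r - T.depth q] r = q := by
  obtain ⟨k, hk⟩ := h
  induction k generalizing r with
  | zero =>
    have : r = q := by simpa using hk
    subst this; simp
  | succ k ih =>
    rw [Function.iterate_succ_apply] at hk
    by_cases hr : r = T.root
    · subst hr
      rw [T.parent_root, T.iter_root] at hk
      subst hk; simp
    · have h1 := ih hk
      have h2 := T.desc_depth_le ⟨k, hk⟩
      have h3 := T.depth_eq r hr
      have h4 : T.depth r - T.depth q = (T.depth (T.parent r) - T.depth q) + 1 := by omega
      rw [h4, Function.iterate_succ_apply, h1]

theorem sdesc_depth (T : PTree V) {r q : V} (h : T.sdesc r q) : T.depth q < T.depth r := by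
  refine lt_of_le_of_ne (T.desc_depth_le h.1) fun he => h.2 ?_
  have := T.desc_iter h.1
  simpa [he] using this

theorem sdesc_iff (T : PTree V) {s : V} (hs : s ≠ T.root) (q : V) :
    T.sdesc s q ↔ q = T.parent s ∨ T.sdesc (T.parent s) q := by
  have hd := T.depth_eq s hs
  constructor
  · rintro ⟨h, hne⟩
    by_cases hq : q = T.parent s
    · exact Or.inl hq
    · right
      rcases (T.desc_iff s q).1 h with h | h
      · exact absurd h hne
      · exact ⟨h, fun e => hq e.symm⟩
  · rintro (h | h)
    · subst h
      refine ⟨(T.desc_iff _ _).2 (Or.inr ⟨0, rfl⟩), fun e => ?_⟩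
      rw [← e] at hd; omega
    · refine ⟨(T.desc_iff _ _).2 (Or.inr h.1), fun e => ?_⟩
      have := T.sdesc_depth h
      rw [e] at hd; rw [e] at this; omega

theorem not_sdesc_root (T : PTree V) (q : V) : ¬ T.sdesc T.root q := fun h =>
  h.2 (T.desc_root h.1).symm

/-- The first vertex on the path from `q` to `r`. -/
def fst (T : PTree V) (r q : V) : V := T.parent^[T.codeLen r q - 1] r

theorem prox_iff (T : PTree V) (w : V → ℕ) {s : V} (hs : s ≠ T.root) (q : V) :
    T.prox w s q ↔ q = T.parent s ∨ (T.prox w (T.parent s) q ∧ w s ≠ w (T.fst (T.parent s) q)) := by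
  have hd := T.depth_eq s hs
  by_cases hq : q = T.parent s
  · refine ⟨fun _ => Or.inl hq, fun _ => ⟨(T.sdesc_iff hs q).2 (Or.inl hq), fun i hi => ?_⟩⟩
    subst hq
    simp only [codeLen] at hi
    omega
  by_cases h : T.sdesc (T.parent s) q
  · have hlt := T.sdesc_depth h
    have h1 : T.codeLen s q = T.codeLen (T.parent s) q + 1 := by simp only [codeLen]; omega
    have h2 : 1 ≤ T.codeLen (T.parent s) q := by simp only [codeLen]; omega
    have h3 : T.parent^[T.codeLen s q - 1] s = T.fst (T.parent s) q := by
      have : T.codeLen s q - 1 = (T.codeLen (T.parent s) q - 1) + 1 := by omega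
      rw [this, Function.iterate_succ_apply, fst]
    constructor
    · rintro ⟨-, hp⟩
      refine Or.inr ⟨⟨h, fun i hi => ?_⟩, ?_⟩
      · have := hp (i + 1) (by omega)
        rw [h3, Function.iterate_succ_apply] at this
        exact this
      · have := hp 0 (by omega)
        rw [h3] at this
        exact this.symm
    · rintro (e | ⟨⟨-, hp⟩, hw⟩)
      · exact absurd e hq
      · refine ⟨(T.sdesc_iff hs q).2 (Or.inr h), fun i hi => ?_⟩
        rw [h3]
        cases i with
        | zero => exact hw.symm
        | succ i =>
          rw [Function.iterate_succ_apply]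
          exact hp i (by omega)
  · constructor
    · rintro ⟨hp, -⟩
      rcases (T.sdesc_iff hs q).1 hp with e | e
      · exact absurd e hq
      · exact absurd e h
    · rintro (e | ⟨hp, -⟩)
      · exact absurd e hq
      · exact absurd hp.1 h

theorem prox_inj (T : PTree V) (w : V → ℕ) {r q q' : V} (h : T.prox w r q) (h' : T.prox w r q')
    (he : w (T.fst r q) = w (T.fst r q')) : q = q' := by
  have a := T.sdesc_depth h.1
  have a' := T.sdesc_depth h'.1
  rcases lt_trichotomy (T.depth q) (T.depth q') with hl | hl | hl
  · exact absurd he (h.2 (T.codeLen r q' - 1) (by simp only [codeLen]; omega))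
  · rw [← T.desc_iter h.1.1, ← T.desc_iter h'.1.1, hl]
  · exact absurd he.symm (h'.2 (T.codeLen r q - 1) (by simp only [codeLen]; omega))

theorem rel_up (T : PTree V) {rel : V → V → Prop} (hE : T.Enriques rel) {s q : V}
    (hs : s ≠ T.root) (h : rel s q) : q = T.parent s ∨ rel (T.parent s) q := by
  rcases (T.sdesc_iff hs q).1 (hE.1 _ _ h) with e | e
  · exact Or.inl e
  · exact Or.inr (hE.2.2 s _ q ⟨1, rfl⟩ e h)

theorem step_iff [Fintype V] (T : PTree V) {rel : V → V → Prop} (hE : T.Enriques rel) {s : V}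
    (hs : s ≠ T.root) : ind rel (T.parent s) ≤ ind rel s ↔
      ∀ q q', rel (T.parent s) q → rel (T.parent s) q' → ¬ rel s q → ¬ rel s q' → q = q' := by
  set r := T.parent s with hr
  let A : Set V := {p | rel r p}
  let B : Set V := {p | rel s p}
  have hA : ind rel r = A.ncard := rfl
  have hB : ind rel s = B.ncard := rfl
  have hBe : B = insert r (A ∩ B) := by
    ext p
    simp only [A, B, Set.mem_insert_iff, Set.mem_inter_iff, Set.mem_setOf_eq]
    constructor
    · intro h
      rcases T.rel_up hE hs h with e | e
      · exact Or.inl e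
      · exact Or.inr ⟨e, h⟩
    · rintro (e | e)
      · subst e; exact hE.2.1 _ _ ⟨rfl, hs⟩
      · exact e.2
  have hn : r ∉ A ∩ B := fun h => (hE.1 _ _ h.1).2 rfl
  have h1 : B.ncard = (A ∩ B).ncard + 1 := by
    conv_lhs => rw [hBe]
    exact Set.ncard_insert_of_notMem hn (Set.toFinite _)
  have h2 : (A ∩ B).ncard + (A \ B).ncard = A.ncard :=
    Set.ncard_inter_add_ncard_diff_eq_ncard A B (Set.toFinite _)
  have h3 : ind rel r ≤ ind rel s ↔ (A \ B).ncard ≤ 1 := by rw [hA, hB]; omega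
  rw [h3, Set.ncard_le_one (Set.toFinite _)]
  constructor
  · intro h q q' a b c d
    exact h q ⟨a, c⟩ q' ⟨b, d⟩
  · intro h q hq q' hq'
    exact h q q' hq.1 hq'.1 hq.2 hq'.2

theorem condA_iff [Fintype V] (T : PTree V) {rel : V → V → Prop} (hE : T.Enriques rel) :
    T.CondA rel ↔ ∀ s, s ≠ T.root →
      ∀ q q', rel (T.parent s) q → rel (T.parent s) q' → ¬ rel s q → ¬ rel s q' → q = q' := by
  constructor
  · intro h s hs
    exact (T.step_iff hE hs).1 (h s _ ⟨1, rfl⟩)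
  · rintro h r q ⟨k, rfl⟩
    induction k generalizing r with
    | zero => simp
    | succ k ih =>
      rw [Function.iterate_succ_apply]
      refine (ih _).trans ?_
      by_cases hr : r = T.root
      · subst hr; rw [T.parent_root]
      · exact (T.step_iff hE hr).2 (h r hr)

open Classical in
/-- The representative vertex whose label is the weight of `s`. -/
noncomputable def phi (T : PTree V) (rel : V → V → Prop) (s : V) : V :=
  if h : s ≠ T.root ∧ ∃ q, rel (T.parent s) q ∧ ¬ rel s q then
    phi T rel (T.fst (T.parent s) h.2.choose)
  else s
termination_by T.depth s
decreasing_by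
  have h1 := T.depth_eq s h.1
  have h2 := T.depth_iter_le (T.codeLen (T.parent s) h.2.choose - 1) (T.parent s)
  unfold fst
  omega

theorem phi_desc (T : PTree V) (rel : V → V → Prop) (n : ℕ) :
    ∀ s, T.depth s = n → T.depth (T.phi rel s) ≤ T.depth s := by
  induction n using Nat.strong_induction_on with
  | _ n ih =>
    intro s hn
    rw [phi]
    split_ifs with h
    · have h1 := T.depth_eq s h.1
      have h2 := T.depth_iter_le (T.codeLen (T.parent s) h.2.choose - 1) (T.parent s)
      have h3 : T.depth (T.fst (T.parent s) h.2.choose) < T.depth s := by unfold fst; omega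
      exact (ih _ (hn ▸ h3) _ rfl).trans h3.le
    · exact le_rfl

theorem phi_fst_lt (T : PTree V) (rel : V → V → Prop) {s : V} (hs : s ≠ T.root) (q : V) :
    T.depth (T.phi rel (T.fst (T.parent s) q)) < T.depth s := by
  have h1 := T.depth_eq s hs
  have h2 := T.depth_iter_le (T.codeLen (T.parent s) q - 1) (T.parent s)
  have h3 := T.phi_desc rel _ (T.fst (T.parent s) q) rfl
  unfold fst at *
  omega

theorem phi_lose (T : PTree V) {rel : V → V → Prop} {s q : V} (hs : s ≠ T.root)
    (hA : ∀ q q', rel (T.parent s) q → rel (T.parent s) q' → ¬ rel s q → ¬ rel s q' → q = q')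
    (h1 : rel (T.parent s) q) (h2 : ¬ rel s q) :
    T.phi rel s = T.phi rel (T.fst (T.parent s) q) := by
  have h : s ≠ T.root ∧ ∃ q, rel (T.parent s) q ∧ ¬ rel s q := ⟨hs, q, h1, h2⟩
  rw [phi, dif_pos h, hA _ _ h.2.choose_spec.1 h1 h.2.choose_spec.2 h2]

theorem phi_keep (T : PTree V) {rel : V → V → Prop} {s : V}
    (h : ∀ q, rel (T.parent s) q → rel s q) : T.phi rel s = s := by
  rw [phi, dif_neg]
  rintro ⟨-, q, h1, h2⟩
  exact h2 (h q h1)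

theorem prox_phi (T : PTree V) {rel : V → V → Prop} (hE : T.Enriques rel)
    (hA : ∀ s, s ≠ T.root →
      ∀ q q', rel (T.parent s) q → rel (T.parent s) q' → ¬ rel s q → ¬ rel s q' → q = q')
    (e : V → ℕ) (he : Function.Injective e) (n : ℕ) :
    ∀ s, T.depth s = n → ∀ q, T.prox (fun v => e (T.phi rel v)) s q ↔ rel s q := by
  induction n using Nat.strong_induction_on with
  | _ n ih =>
    intro s hn q
    by_cases hs : s = T.root
    · subst hs
      exact ⟨fun h => absurd h.1 (T.not_sdesc_root q),
        fun h => absurd (hE.1 _ _ h) (T.not_sdesc_root q)⟩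
    have hd := T.depth_eq s hs
    have ih' := ih (T.depth (T.parent s)) (by omega) (T.parent s) rfl
    rw [T.prox_iff _ hs, ih']
    constructor
    · rintro (h | ⟨h1, h2⟩)
      · subst h; exact hE.2.1 _ _ ⟨rfl, hs⟩
      · by_contra h3
        exact h2 (congrArg e (T.phi_lose hs (hA s hs) h1 h3))
    · intro h
      rcases T.rel_up hE hs h with h1 | h1
      · exact Or.inl h1
      refine Or.inr ⟨h1, fun hw => ?_⟩
      by_cases hk : ∀ q, rel (T.parent s) q → rel s q
      · have h4 := he hw
        have h5 := T.phi_fst_lt rel hs q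
        rw [← h4, T.phi_keep hk] at h5
        exact lt_irrefl _ h5
      · push Not at hk
        obtain ⟨q', h2, h3⟩ := hk
        have hw' : e (T.phi rel s) = e (T.phi rel (T.fst (T.parent s) q)) := hw
        rw [T.phi_lose hs (hA s hs) h2 h3] at hw'
        have := T.prox_inj (fun v => e (T.phi rel v)) ((ih' q').2 h2) ((ih' q).2 h1) hw'
        subst this
        exact h3 h

theorem phi_sib (T : PTree V) {rel : V → V → Prop} (hE : T.Enriques rel)
    (hA : ∀ s, s ≠ T.root →
      ∀ q q', rel (T.parent s) q → rel (T.parent s) q' → ¬ rel s q → ¬ rel s q' → q = q')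
    (hB : T.CondB rel)
    (e : V → ℕ) (he : Function.Injective e) {r s : V} (hr : r ≠ T.root) (hs : s ≠ T.root)
    (hp : T.parent r = T.parent s) (h : T.phi rel r = T.phi rel s) : r = s := by
  have hdr := T.depth_eq r hr
  have hds := T.depth_eq s hs
  have hd : T.depth r = T.depth s := by rw [hdr, hds, hp]
  by_cases hkr : ∀ q, rel (T.parent r) q → rel r q
  · by_cases hks : ∀ q, rel (T.parent s) q → rel s q
    · rwa [T.phi_keep hkr, T.phi_keep hks] at h
    · push Not at hks
      obtain ⟨q, h2, h3⟩ := hks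
      have h5 := T.phi_fst_lt rel hs q
      rw [← T.phi_lose hs (hA s hs) h2 h3, ← h, T.phi_keep hkr] at h5
      omega
  · push Not at hkr
    obtain ⟨q, h2, h3⟩ := hkr
    by_cases hks : ∀ q, rel (T.parent s) q → rel s q
    · have h5 := T.phi_fst_lt rel hr q
      rw [← T.phi_lose hr (hA r hr) h2 h3, h, T.phi_keep hks] at h5
      omega
    · push Not at hks
      obtain ⟨q', h2', h3'⟩ := hks
      rw [T.phi_lose hr (hA r hr) h2 h3, T.phi_lose hs (hA s hs) h2' h3', hp] at h
      rw [hp] at h2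
      have hpx := T.prox_phi hE hA e he _ (T.parent s) rfl
      have := T.prox_inj (fun v => e (T.phi rel v)) ((hpx q).2 h2) ((hpx q').2 h2') (congrArg e h)
      subst this
      exact hB _ _ h2 r s ⟨hp, hr⟩ ⟨rfl, hs⟩ h3 h3'

end PTree

/-- Let `Γ` be a finite rooted tree and `⤳` a binary relation on its
vertices satisfying the P-Enriques-diagram conditions (P1), (P2), (P3).  Then there exist
an integer `d ≥ 2` and a `d`-weighting `α` of `Γ` whose induced proximity relation equals
`⤳` if and only if (a) the proximity index is non-decreasing and (b) whenever `r ⤳ q`,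
at most one child `s ∈ r⁺` satisfies `¬ (s ⤳ q)`. -/
theorem toric_PEnriques_characterization {V : Type} [Fintype V] (T : PTree V)
    (rel : V → V → Prop) (hE : T.Enriques rel) :
    (∃ d : ℕ, 2 ≤ d ∧ ∃ w : V → ℕ, T.IsWeighting d w ∧
        ∀ r q, T.prox w r q ↔ rel r q) ↔
      T.CondA rel ∧ T.CondB rel := by
  rw [T.condA_iff hE]
  constructor
  · rintro ⟨d, -, w, hw, hprox⟩
    have key : ∀ s, s ≠ T.root → ∀ q, rel (T.parent s) q → ¬ rel s q →
        w s = w (T.fst (T.parent s) q) := by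
      intro s hs q h1 h2
      by_contra h3
      exact h2 ((hprox _ _).1 ((T.prox_iff w hs q).2 (Or.inr ⟨(hprox _ _).2 h1, h3⟩)))
    constructor
    · intro s hs q q' h1 h1' h2 h2'
      exact T.prox_inj w ((hprox _ _).2 h1) ((hprox _ _).2 h1')
        ((key s hs q h1 h2).symm.trans (key s hs q' h1' h2'))
    · rintro r q h s s' ⟨hs, hs0⟩ ⟨hs', hs0'⟩ h1 h2
      by_contra hne
      refine hw.2 s s' hs0 hs0' (hs.trans hs'.symm) hne ?_
      rw [key s hs0 q (hs ▸ h) h1, key s' hs0' q (hs' ▸ h) h2, hs, hs']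
  · rintro ⟨hA, hB⟩
    let e : V → ℕ := fun v => (Fintype.equivFin V v : ℕ) + 1
    have he : Function.Injective e := by
      intro a b hab
      have : (Fintype.equivFin V a : ℕ) = Fintype.equivFin V b := by simpa [e] using hab
      exact (Fintype.equivFin V).injective (Fin.ext this)
    refine ⟨Fintype.card V + 2, by omega, fun v => e (T.phi rel v), ⟨?_, ?_⟩, ?_⟩
    · intro v _
      have := (Fintype.equivFin V (T.phi rel v)).2
      simp only [e]
      omega
    · intro r s hr hs hp hne h
      exact hne (T.phi_sib hE hA hB e he hr hs hp (he h))
    · intro r q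
      exact T.prox_phi hE hA e he _ r rfl q
end

section
/- Let Γ be a finite rooted tree that is a chain (every vertex has at most one child), with ⪰-maximal vertex q_max, and let ⤳ be a binary relation on its vertices satisfying the P-Enriques-diagram conditions (P1), (P2), (P3). Then there exist an integer d ≥ 2 and a d-weighting α of Γ with ⤳_α = ⤳ if and only if the proximity index is non-decreasing, i.e. ind(r) ≥ ind(q) whenever r ⪰ q; and in that case the minimum such d equals max(2, ind(q_max)). (Combinatorial form of the Corollary: a P-Enriques diagram whose graph is a chain is toric iff the proximity index is non-decreasing, and then the minimum dimension of an associated constellation is the index of the terminal point, and at least 2.) -/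
theorem aux_exists (A : ℕ → Finset ℕ) (n : ℕ)
    (h1 : ∀ j, A j ⊆ Finset.range j)
    (h2 : ∀ j, j < n → j ∈ A (j+1))
    (h3 : ∀ j, j < n → ∀ i, i < j → i ∈ A (j+1) → i ∈ A j)
    (h4 : ∀ j, j < n → (A j).card ≤ (A (j+1)).card) :
    ∃ a : ℕ → ℕ, (∀ j, j ≤ n → ∀ i, i < j →
        (i ∈ A j ↔ ∀ m, i + 2 ≤ m → m ≤ j → a (i+1) ≠ a m)) ∧
      (∀ m, 1 ≤ m → m ≤ n → 1 ≤ a m ∧ a m ≤ (A n).card) ∧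
      (∀ i ∈ A n, ∀ i' ∈ A n, a (i+1) = a (i'+1) → i = i') := by
  induction n with
  | zero =>
    refine ⟨fun _ => 0, ?_, ?_, ?_⟩
    · intro j hj i hi; omega
    · intro m hm hm'; omega
    · intro i hi; have := h1 0 hi; simp at this
  | succ n ih =>
    obtain ⟨a, ha1, ha2, ha3⟩ := ih (fun j hj => h2 j (by omega)) (fun j hj => h3 j (by omega))
      (fun j hj => h4 j (by omega))
    have lt : ∀ {i j}, i ∈ A j → i < j := fun h => Finset.mem_range.1 (h1 _ h)
    have hn : n ∈ A (n+1) := h2 n (by omega)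
    have hnn : n ∉ A n := fun h => by have := lt h; omega
    have hcard := h4 n (by omega)
    have hsub : (A (n+1)).erase n ⊆ A n := by
      intro i hi
      rw [Finset.mem_erase] at hi
      have := lt hi.2
      exact h3 n (by omega) i (by omega) hi.2
    have hce := Finset.card_erase_of_mem hn
    -- new colour
    obtain ⟨c, hc1, hc2, hc3⟩ : ∃ c, 1 ≤ c ∧ c ≤ (A (n+1)).card ∧
        ∀ i ∈ A n, (i ∈ A (n+1) ↔ a (i+1) ≠ c) := by
      by_cases hd : ∃ i0 ∈ A n, i0 ∉ A (n+1)
      · obtain ⟨i0, hi0, hi0'⟩ := hd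
        have hb := ha2 (i0+1) (by omega) (by have := lt hi0; omega)
        have heq : (A (n+1)).erase n = (A n).erase i0 := by
          apply Finset.eq_of_subset_of_card_le
          · intro i hi
            rw [Finset.mem_erase]
            refine ⟨?_, hsub hi⟩
            rintro rfl
            exact hi0' (Finset.mem_of_mem_erase hi)
          · rw [hce, Finset.card_erase_of_mem hi0]; omega
        refine ⟨a (i0+1), hb.1, hb.2.trans hcard, ?_⟩
        intro i hi
        have hin : i ≠ n := by rintro rfl; exact hnn hi
        have : i ∈ (A (n+1)).erase n ↔ i ∈ (A n).erase i0 := by rw [heq]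
        rw [Finset.mem_erase, Finset.mem_erase] at this
        constructor
        · intro h he
          exact (this.1 ⟨hin, h⟩).1 (ha3 i hi i0 hi0 he)
        · intro h
          exact (this.2 ⟨fun he => h (by rw [he]), hi⟩).2
      · push Not at hd
        have : (insert n (A n)).card ≤ (A (n+1)).card := by
          apply Finset.card_le_card
          intro i hi
          rcases Finset.mem_insert.1 hi with rfl | h
          · exact hn
          · exact hd i h
        rw [Finset.card_insert_of_notMem hnn] at this
        refine ⟨(A n).card + 1, by omega, this, ?_⟩
        intro i hi
        have hb := ha2 (i+1) (by omega) (by have := lt hi; omega)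
        exact ⟨fun _ => by omega, fun _ => hd i hi⟩
    have e1 : ∀ m, m ≤ n → Function.update a (n+1) c m = a m := fun m hm =>
      Function.update_of_ne (by omega) _ _
    have e2 : Function.update a (n+1) c (n+1) = c := Function.update_self _ _ _
    refine ⟨Function.update a (n+1) c, ?_, ?_, ?_⟩
    · intro j hj i hi
      by_cases hjn : j ≤ n
      · rw [ha1 j hjn i hi, e1 _ (by omega)]
        constructor
        · intro h m hm hm'
          rw [e1 _ (by omega)]; exact h m hm hm'
        · intro h m hm hm'
          have := h m hm hm'
          rwa [e1 _ (by omega)] at this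
      · obtain rfl : j = n+1 := by omega
        by_cases hin : i = n
        · subst hin
          exact ⟨fun _ m _ _ => by omega, fun _ => hn⟩
        · rw [e1 (i+1) (by omega)]
          constructor
          · intro h m hm hm'
            have hiA := h3 n (by omega) i (by omega) h
            by_cases hmn : m ≤ n
            · rw [e1 m hmn]
              exact (ha1 n le_rfl i (by omega)).1 hiA m hm hmn
            · obtain rfl : m = n+1 := by omega
              rw [e2]; exact (hc3 i hiA).1 h
          · intro h
            have hiA : i ∈ A n := by
              rw [ha1 n le_rfl i (by omega)]
              intro m hm hm'
              have := h m hm (by omega)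
              rwa [e1 m hm'] at this
            rw [hc3 i hiA]
            have := h (n+1) (by omega) le_rfl
            rwa [e2] at this
    · intro m hm hm'
      by_cases hmn : m ≤ n
      · rw [e1 m hmn]
        have := ha2 m hm hmn
        omega
      · obtain rfl : m = n+1 := by omega
        rw [e2]; exact ⟨hc1, hc2⟩
    · have key : ∀ i ∈ A (n+1), i ≠ n → i ∈ A n := fun i hi hne =>
        hsub (Finset.mem_erase.2 ⟨hne, hi⟩)
      intro i hi i' hi' he
      by_cases hin : i = n <;> by_cases hin' : i' = n
      · omega
      · have hA := key i' hi' hin'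
        have := lt hA
        rw [hin, e2, e1 _ (by omega)] at he
        exact absurd he.symm ((hc3 i' hA).1 hi')
      · have hA := key i hi hin
        have := lt hA
        rw [hin', e2, e1 _ (by omega)] at he
        exact absurd he ((hc3 i hA).1 hi)
      · have hA := key i hi hin
        have hA' := key i' hi' hin'
        have := lt hA
        have := lt hA'
        rw [e1 _ (by omega), e1 _ (by omega)] at he
        exact ha3 i hA i' hA' he

theorem aux_card (B : Finset ℕ) (j : ℕ) (a : ℕ → ℕ) (h1 : B ⊆ Finset.range j)
    (h : ∀ i, i < j → (i ∈ B ↔ ∀ m, i + 2 ≤ m → m ≤ j → a (i+1) ≠ a m)) :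
    B.card = ((Finset.Icc 1 j).image a).card := by
  classical
  have lt : ∀ {i}, i ∈ B → i < j := fun h => Finset.mem_range.1 (h1 h)
  have hinj : Set.InjOn (fun i => a (i+1)) (B : Set ℕ) := by
    intro i hi i' hi' he
    have hl := lt hi
    have hl' := lt hi'
    simp only at he
    rcases lt_trichotomy i i' with hlt | heq | hlt
    · exact absurd he ((h i hl).1 hi (i'+1) (by omega) (by omega))
    · exact heq
    · exact absurd he.symm ((h i' hl').1 hi' (i+1) (by omega) (by omega))
  rw [← Finset.card_image_of_injOn hinj]
  congr 1
  ext c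
  simp only [Finset.mem_image, Finset.mem_Icc]
  constructor
  · rintro ⟨i, hi, rfl⟩
    exact ⟨i+1, ⟨by omega, lt hi⟩, rfl⟩
  · rintro ⟨m, hm, rfl⟩
    have hne : ((Finset.Icc 1 j).filter (fun k => a k = a m)).Nonempty :=
      ⟨m, by simp [hm]⟩
    obtain ⟨k, hk, hmax⟩ := Finset.exists_max_image _ id hne
    simp only [Finset.mem_filter, Finset.mem_Icc, id] at hk hmax
    have e : k - 1 + 1 = k := by omega
    refine ⟨k-1, ?_, by rw [e]; exact hk.2⟩
    rw [h _ (by omega), e]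
    intro l hl hl' hEq
    have := hmax l ⟨⟨by omega, hl'⟩, by rw [← hEq]; exact hk.2⟩
    omega

namespace PTree
variable {V : Type}

theorem depth_parent (T : PTree V) (x : V) : T.depth (T.parent x) = T.depth x - 1 := by
  by_cases h : x = T.root
  · subst h; rw [T.parent_root, T.depth_root]
  · have := T.depth_eq x h; omega

theorem depth_iter (T : PTree V) (k : ℕ) (x : V) :
    T.depth (T.parent^[k] x) = T.depth x - k := by
  induction k generalizing x with
  | zero => rfl
  | succ k ih => rw [Function.iterate_succ_apply, ih, depth_parent]; omega

theorem depth_zero (T : PTree V) (x : V) : T.depth x = 0 ↔ x = T.root := by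
  constructor
  · intro h
    by_contra hne
    have := T.depth_eq x hne; omega
  · rintro rfl; exact T.depth_root

theorem depth_inj (T : PTree V) (qmax : V) (hqmax : ∀ v, T.desc qmax v) (x y : V)
    (h : T.depth x = T.depth y) : x = y := by
  by_cases h0 : T.depth x = 0
  · rw [(T.depth_zero x).1 h0, (T.depth_zero y).1 (h ▸ h0)]
  · obtain ⟨k, rfl⟩ := hqmax x
    obtain ⟨l, rfl⟩ := hqmax y
    rw [depth_iter, depth_iter] at h
    rw [depth_iter] at h0
    have : k = l := by omega
    rw [this]

end PTree

/-- Let `Γ` be a finite rooted tree which is a chain (every vertex has at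
most one child), with `⪰`-maximal vertex `qmax`, and let `⤳` satisfy the
P-Enriques-diagram conditions.  Then some `d`-weighting (`d ≥ 2`) induces `⤳` iff the
proximity index is non-decreasing; and in that case the minimum such `d` is
`max (2, ind qmax)`. -/
theorem toric_PEnriques_chain {V : Type} [Fintype V] (T : PTree V)
    (rel : V → V → Prop) (hE : T.Enriques rel)
    (hchain : ∀ q r s, T.child r q → T.child s q → r = s)
    (qmax : V) (hqmax : ∀ v, T.desc qmax v) :
    ((∃ d : ℕ, 2 ≤ d ∧ ∃ w : V → ℕ, T.IsWeighting d w ∧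
        ∀ r q, T.prox w r q ↔ rel r q) ↔ T.CondA rel) ∧
    (T.CondA rel →
      IsLeast {d : ℕ | 2 ≤ d ∧ ∃ w : V → ℕ, T.IsWeighting d w ∧
          ∀ r q, T.prox w r q ↔ rel r q}
        (max 2 (ind rel qmax))) := by
  classical
  obtain ⟨P1, P2, P3⟩ := hE
  have dinj := T.depth_inj qmax hqmax
  obtain ⟨n, hn⟩ : ∃ n, n = T.depth qmax := ⟨_, rfl⟩
  have dle : ∀ x, T.depth x ≤ n := by
    intro x
    obtain ⟨k, rfl⟩ := hqmax x
    rw [PTree.depth_iter]; omega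
  obtain ⟨v, hv⟩ : ∃ v : ℕ → V, ∀ j, j ≤ n → T.depth (v j) = j :=
    ⟨fun j => T.parent^[n-j] qmax, fun j hj => by
      rw [PTree.depth_iter]; omega⟩
  have vd : ∀ x, v (T.depth x) = x := fun x => dinj _ _ (hv _ (dle x))
  have hdesc : ∀ r q, T.desc r q ↔ T.depth q ≤ T.depth r := by
    intro r q
    constructor
    · rintro ⟨k, rfl⟩
      rw [PTree.depth_iter]; omega
    · intro h
      refine ⟨T.depth r - T.depth q, dinj _ _ ?_⟩
      rw [PTree.depth_iter]; omega
  have hsdesc : ∀ r q, T.sdesc r q ↔ T.depth q < T.depth r := by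
    intro r q
    unfold PTree.sdesc
    rw [hdesc]
    constructor
    · rintro ⟨h, hne⟩
      exact lt_of_le_of_ne h (fun he => hne (dinj _ _ he.symm))
    · intro h
      exact ⟨h.le, fun he => by rw [he] at h; omega⟩
  have hchild : ∀ r q, T.depth r = T.depth q + 1 → T.child r q := by
    intro r q h
    refine ⟨dinj _ _ ?_, fun he => ?_⟩
    · rw [PTree.depth_parent]; omega
    · rw [← PTree.depth_zero] at he; omega
  have hit : ∀ k r, T.parent^[k] r = v (T.depth r - k) := by
    intro k r
    apply dinj
    rw [PTree.depth_iter, hv]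
    have := dle r
    omega
  have hprox : ∀ w r q, T.prox w r q ↔ T.depth q < T.depth r ∧
      ∀ m, T.depth q + 2 ≤ m → m ≤ T.depth r → w (v (T.depth q + 1)) ≠ w (v m) := by
    intro w r q
    unfold PTree.prox PTree.codeLen
    rw [hsdesc]
    apply and_congr_right
    intro hlt
    rw [hit, show T.depth r - (T.depth r - T.depth q - 1) = T.depth q + 1 by omega]
    constructor
    · intro h m hm hm'
      have := h (T.depth r - m) (by omega)
      rwa [hit, show T.depth r - (T.depth r - m) = m by omega] at this
    · intro h i hi
      rw [hit]
      exact h _ (by omega) (by omega)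
  obtain ⟨A, hA⟩ : ∃ A : ℕ → Finset ℕ, ∀ j i, i ∈ A j ↔ i < j ∧ rel (v j) (v i) :=
    ⟨fun j => (Finset.range j).filter (fun i => rel (v j) (v i)), by simp⟩
  have hAr : ∀ j, A j ⊆ Finset.range j := fun j i hi => Finset.mem_range.2 ((hA j i).1 hi).1
  have hrel : ∀ r q, rel r q ↔ T.depth q ∈ A (T.depth r) := by
    intro r q
    rw [hA, vd, vd]
    exact ⟨fun h => ⟨(hsdesc _ _).1 (P1 _ _ h), h⟩, fun h => h.2⟩
  have hind : ∀ r, ind rel r = (A (T.depth r)).card := by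
    intro r
    unfold ind
    rw [Nat.card_eq_fintype_card, Fintype.card_subtype]
    apply Finset.card_bij (fun q _ => T.depth q)
    · intro q hq
      exact (hrel _ _).1 (Finset.mem_filter.1 hq).2
    · intro x _ y _ h
      exact dinj _ _ h
    · intro i hi
      have h := (hA _ _).1 hi
      have hi' : i ≤ n := by have := dle r; omega
      refine ⟨v i, ?_, hv i hi'⟩
      rw [Finset.mem_filter]
      refine ⟨Finset.mem_univ _, ?_⟩
      have := h.2
      rwa [vd] at this
  have hfwd : ∀ w : V → ℕ, (∀ r q, T.prox w r q ↔ rel r q) →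
      ∀ r, ind rel r = ((Finset.Icc 1 (T.depth r)).image (fun j => w (v j))).card := by
    intro w hw r
    rw [hind]
    apply aux_card _ _ _ (hAr _)
    intro i hi
    have hi' : i ≤ n := by have := dle r; omega
    have h1 := hrel r (v i)
    rw [hv i hi'] at h1
    rw [← h1, ← hw, hprox, hv i hi']
    exact ⟨fun h => h.2, fun h => ⟨hi, h⟩⟩
  have hcons : T.CondA rel → (2 ≤ max 2 (ind rel qmax) ∧ ∃ w : V → ℕ,
      T.IsWeighting (max 2 (ind rel qmax)) w ∧ ∀ r q, T.prox w r q ↔ rel r q) := by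
    intro hCA
    refine ⟨le_max_left _ _, ?_⟩
    obtain ⟨a, ha1, ha2, -⟩ := aux_exists A n hAr
      (by
        intro j hj
        rw [hA]
        refine ⟨by omega, P2 _ _ (hchild _ _ ?_)⟩
        rw [hv _ (by omega), hv _ (by omega)])
      (by
        intro j hj i hi h
        rw [hA] at h ⊢
        refine ⟨hi, P3 (v (j+1)) _ _ ?_ ?_ h.2⟩
        · rw [hdesc, hv _ (by omega), hv _ (by omega)]; omega
        · rw [hsdesc, hv _ (by omega), hv _ (by omega)]; omega)
      (by
        intro j hj
        have := hCA (v (j+1)) (v j) (by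
          rw [hdesc, hv _ (by omega), hv _ (by omega)]; omega)
        rwa [hind, hind, hv _ (by omega), hv _ (by omega)] at this)
    refine ⟨fun x => a (T.depth x), ⟨?_, ?_⟩, ?_⟩
    · intro x hx
      rw [Ne, ← PTree.depth_zero] at hx
      have := ha2 (T.depth x) (by omega) (dle x)
      rw [hind, ← hn]
      exact ⟨this.1, this.2.trans (le_max_right _ _)⟩
    · intro r s hr hs he hne
      exact absurd (hchain (T.parent s) r s ⟨he, hr⟩ ⟨rfl, hs⟩) hne
    · intro r q
      rw [hprox]
      have hr := dle r
      constructor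
      · rintro ⟨hlt, h⟩
        rw [hrel, ha1 _ hr _ hlt]
        intro m hm hm'
        have := h m hm hm'
        rwa [hv _ (by omega), hv _ (by omega)] at this
      · intro h
        have hlt := (hsdesc _ _).1 (P1 _ _ h)
        refine ⟨hlt, fun m hm hm' => ?_⟩
        rw [hv _ (by omega), hv _ (by omega)]
        rw [hrel, ha1 _ hr _ hlt] at h
        exact h m hm hm'
  refine ⟨⟨?_, fun h => ⟨_, hcons h⟩⟩, fun h => ⟨hcons h, ?_⟩⟩
  · rintro ⟨d, -, w, -, hw⟩ r q hrq
    rw [hfwd w hw, hfwd w hw]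
    apply Finset.card_le_card
    apply Finset.image_subset_image
    exact Finset.Icc_subset_Icc_right ((hdesc _ _).1 hrq)
  · rintro d ⟨hd, w, hW, hw⟩
    refine max_le hd ?_
    rw [hfwd w hw]
    calc _ ≤ (Finset.Icc 1 d).card := by
          apply Finset.card_le_card
          intro c hc
          obtain ⟨j, hj, rfl⟩ := Finset.mem_image.1 hc
          rw [Finset.mem_Icc] at hj
          rw [Finset.mem_Icc]
          apply hW.1
          rw [Ne, ← PTree.depth_zero, hv _ (by omega)]
          omega
      _ = d := by simp
end

section
/- For every integer d ≥ 2 and every d-weighting α of a finite rooted tree Γ, the induced proximity relation ⤳_α satisfies the P-Enriques-diagram conditions (P1), (P2) and (P3); moreover ind_α(q) ≤ d for every vertex q, where ind_α(q) := #{p ∈ V : q ⤳_α p}. (Combinatorial counterpart of the facts that proximity among infinitely near points satisfies the Enriques-diagram axioms and that, in dimension d, a point may be proximate to at most d points.) -/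
theorem PTree.depth_parent_s3 {V : Type} (T : PTree V) (v : V) :
    T.depth (T.parent v) = T.depth v - 1 := by
  by_cases h : v = T.root
  · subst h; rw [T.parent_root, T.depth_root]
  · rw [T.depth_eq v h]; rfl

theorem PTree.depth_iter_s3 {V : Type} (T : PTree V) (k : ℕ) (v : V) :
    T.depth (T.parent^[k] v) = T.depth v - k := by
  induction k with
  | zero => rfl
  | succ n ih => rw [Function.iterate_succ_apply', T.depth_parent_s3, ih]; omega

theorem PTree.eq_root {V : Type} (T : PTree V) (v : V) (h : T.depth v = 0) : v = T.root := by
  by_contra h'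
  have := T.depth_eq v h'
  omega

theorem PTree.desc_iter_s3 {V : Type} (T : PTree V) {r q : V} (h : T.desc r q) :
    T.depth q ≤ T.depth r ∧ T.parent^[T.depth r - T.depth q] r = q := by
  obtain ⟨k, rfl⟩ := h
  have hk := T.depth_iter_s3 k r
  refine ⟨by omega, ?_⟩
  by_cases h : k ≤ T.depth r
  · rw [hk]; congr 1; congr 1; omega
  · rw [T.eq_root (T.parent^[k] r) (by omega)]
    apply T.eq_root
    rw [T.depth_iter_s3, T.depth_root]; omega

theorem PTree.sdesc_lt {V : Type} (T : PTree V) {r q : V} (h : T.sdesc r q) :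
    T.depth q < T.depth r := by
  obtain ⟨h1, h2⟩ := T.desc_iter_s3 h.1
  rcases Nat.lt_or_ge (T.depth q) (T.depth r) with h3 | h3
  · exact h3
  · rw [Nat.sub_eq_zero_of_le h3] at h2
    exact absurd h2 h.2

theorem prox_satisfies_Enriques_and_ind_le {V : Type} [Fintype V] (T : PTree V)
    (d : ℕ) (hd : 2 ≤ d) (w : V → ℕ) (hw : T.IsWeighting d w) :
    T.Enriques (T.prox w) ∧ ∀ q : V, ind (T.prox w) q ≤ d := by
  refine ⟨⟨fun q p h => h.1, ?_, ?_⟩, ?_⟩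
  · rintro q p ⟨rfl, hq⟩
    have h := T.depth_eq q hq
    refine ⟨⟨⟨1, rfl⟩, fun e => ?_⟩, fun i hi => ?_⟩
    · rw [← e] at h; omega
    · unfold PTree.codeLen at hi; omega
  · rintro r p q hrp hpq ⟨hrq, h⟩
    refine ⟨hpq, fun i hi => ?_⟩
    obtain ⟨h1, h2⟩ := T.desc_iter_s3 hrp
    have h3 := T.sdesc_lt hpq
    unfold PTree.codeLen at *
    have := h (i + (T.depth r - T.depth p)) (by omega)
    rw [Function.iterate_add_apply, h2] at this
    rw [show T.depth r - T.depth q - 1 =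
      (T.depth p - T.depth q - 1) + (T.depth r - T.depth p) by omega,
      Function.iterate_add_apply, h2] at this
    exact this
  · intro q
    have key : ∀ p, T.prox w q p → w (T.parent^[T.codeLen q p - 1] q) ∈ Finset.Icc 1 d := by
      intro p hp
      rw [Finset.mem_Icc]
      apply hw.1
      intro e
      have h1 := T.depth_iter_s3 (T.codeLen q p - 1) q
      rw [e, T.depth_root] at h1
      have := T.sdesc_lt hp.1
      unfold PTree.codeLen at h1
      omega
    have hlt : ∀ p p', T.prox w q p → T.prox w q p' →
        w (T.parent^[T.codeLen q p - 1] q) = w (T.parent^[T.codeLen q p' - 1] q) →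
        ¬ T.codeLen q p < T.codeLen q p' := by
      intro p p' hp hp' e hl
      have := T.sdesc_lt hp.1
      have h1 : 0 < T.codeLen q p := by unfold PTree.codeLen; omega
      exact hp'.2 (T.codeLen q p - 1) (by omega) e.symm
    have hinj : Function.Injective
        (fun p : {p : V // T.prox w q p} =>
          (⟨w (T.parent^[T.codeLen q p.1 - 1] q), key p.1 p.2⟩ : Finset.Icc 1 d)) := by
      rintro ⟨p, hp⟩ ⟨p', hp'⟩ e
      have e' := congrArg Subtype.val e
      simp only at e'
      have a := hlt p p' hp hp' e'
      have b := hlt p' p hp' hp e'.symm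
      have c : T.codeLen q p = T.codeLen q p' := by omega
      apply Subtype.ext
      show p = p'
      rw [← (T.desc_iter_s3 hp.1.1).2, ← (T.desc_iter_s3 hp'.1.1).2]
      unfold PTree.codeLen at c
      rw [c]
    have := Nat.card_le_card_of_injective _ hinj
    unfold ind
    rw [Nat.card_eq_fintype_card (α := Finset.Icc 1 d), Fintype.card_coe, Nat.card_Icc] at this
    omega
end

section
/- Let n ≥ 1 and let a = (a₁,…,a_n) and b = (b₁,…,b_n) be two sequences of positive integers of the same length n. If the induced proximity relations coincide, i.e. for all 0 ≤ i < j ≤ n one has (a_{i+1} ≠ a_l for all i+2 ≤ l ≤ j) ⟺ (b_{i+1} ≠ b_l for all i+2 ≤ l ≤ j), then the induced linear proximity relations coincide, i.e. for all 0 ≤ i < j ≤ n one has (j = i+1, or (a_{i+1} ≠ a_{i+2} and a_{i+2} = a_{i+3} = ⋯ = a_j)) ⟺ (j = i+1, or (b_{i+1} ≠ b_{i+2} and b_{i+2} = b_{i+3} = ⋯ = b_j)). (Combinatorial form of the Proposition: if 𝒞 is a toric chain constellation, in any dimension, the proximity relation determines the linear proximity relation.) -/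
theorem chain_aux (n : ℕ) (a b : ℕ → ℕ)
    (h : ∀ i, i + 2 ≤ n → (a (i + 1) = a (i + 2) ↔ b (i + 1) = b (i + 2)))
    (i j : ℕ) (hij : i < j) (hj : j ≤ n)
    (H : j = i + 1 ∨ (a (i + 1) ≠ a (i + 2) ∧ ∀ l, i + 3 ≤ l → l ≤ j → a l = a (i + 2))) :
    j = i + 1 ∨ (b (i + 1) ≠ b (i + 2) ∧ ∀ l, i + 3 ≤ l → l ≤ j → b l = b (i + 2)) := by
  rcases H with H | ⟨h1, h2⟩
  · exact Or.inl H
  by_cases hj1 : j = i + 1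
  · exact Or.inl hj1
  refine Or.inr ⟨fun e => h1 ((h i (by omega)).2 e), ?_⟩
  intro l hl
  induction l, hl using Nat.le_induction with
  | base =>
    intro hlj
    exact ((h (i + 1) (by omega)).1 (h2 (i + 3) le_rfl hlj).symm).symm
  | succ m hm ih =>
    intro hlj
    obtain ⟨k, rfl⟩ : ∃ k, m = k + 1 := ⟨m - 1, by omega⟩
    have e1 := h2 (k + 1) hm (by omega)
    have e2 := h2 (k + 1 + 1) (by omega) hlj
    have e3 := (h k (by omega)).1 (e1.trans e2.symm)
    exact e3.symm.trans (ih (by omega))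

/-- (Combinatorial form of: for a toric chain constellation, the proximity
relation determines the linear proximity relation.)  Let `a, b : ℕ → ℕ` code two toric
chains of the same length `n ≥ 1` (entries `a 1, …, a n` and `b 1, …, b n` positive).  If
the induced proximity relations coincide, i.e. for all `0 ≤ i < j ≤ n`,
`(∀ l, i+2 ≤ l ≤ j → a (i+1) ≠ a l) ↔ (∀ l, i+2 ≤ l ≤ j → b (i+1) ≠ b l)`,
then the induced linear proximity relations coincide, i.e. for all `0 ≤ i < j ≤ n`,
`(j = i+1 ∨ (a (i+1) ≠ a (i+2) ∧ a (i+2) = ⋯ = a j)) ↔ (same for b)`. -/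
theorem chain_proximity_determines_linear_proximity
    (n : ℕ) (hn : 1 ≤ n) (a b : ℕ → ℕ)
    (ha : ∀ l, 1 ≤ l → l ≤ n → 0 < a l) (hb : ∀ l, 1 ≤ l → l ≤ n → 0 < b l)
    (hprox : ∀ i j, i < j → j ≤ n →
      ((∀ l, i + 2 ≤ l → l ≤ j → a (i + 1) ≠ a l) ↔
        (∀ l, i + 2 ≤ l → l ≤ j → b (i + 1) ≠ b l))) :
    ∀ i j, i < j → j ≤ n →
      ((j = i + 1 ∨ (a (i + 1) ≠ a (i + 2) ∧ ∀ l, i + 3 ≤ l → l ≤ j → a l = a (i + 2))) ↔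
        (j = i + 1 ∨ (b (i + 1) ≠ b (i + 2) ∧ ∀ l, i + 3 ≤ l → l ≤ j → b l = b (i + 2)))) := by
  have h : ∀ i, i + 2 ≤ n → (a (i + 1) = a (i + 2) ↔ b (i + 1) = b (i + 2)) := by
    intro i hi
    have key : ∀ c : ℕ → ℕ, (∀ l, i + 2 ≤ l → l ≤ i + 2 → c (i + 1) ≠ c l) ↔
        c (i + 1) ≠ c (i + 2) := by
      intro c
      constructor
      · intro H
        exact H _ le_rfl le_rfl
      · intro H l h1 h2
        obtain rfl : l = i + 2 := le_antisymm h2 h1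
        exact H
    have := hprox i (i + 2) (by omega) hi
    rw [key a, key b] at this
    exact not_iff_not.1 this
  intro i j hij hj
  exact ⟨chain_aux n a b h i j hij hj, chain_aux n b a (fun i hi => (h i hi).symm) i j hij hj⟩
end

section
/- For every integer d ≥ 2 and every d-weighting α of a finite rooted tree Γ: (i) for every vertex q and every child r ∈ q⁺, there is at most one s ∈ r⁺ such that the chain {q, r, s} is contained in no member of Γ_α(q); and (ii) if a chain {p, …, q, r} rooted at p with at least three vertices (so p ≺ q and r ∈ q⁺) is contained in some γ ∈ Γ_α(p), and s ∈ r⁺ is such that the chain {q, r, s} is contained in no member of Γ_α(q), then s ∈ γ. (Properties 3(a) and 3(b) of the Proposition on linear-proximity structures.) -/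
namespace PTree

variable {V : Type}

/-- The code of `r` over `q` has the form `(a, b, b, …, b)` : the first entry is `a` and
every later entry is `b`.  (The `j`-th entry of the code, `1 ≤ j ≤ k`, is the weight of
`parent^[k-j] r`, where `k` is the code length.) -/
def codeAB (T : PTree V) (w : V → ℕ) (q : V) (a b : ℕ) (r : V) : Prop :=
  w (T.parent^[T.codeLen r q - 1] r) = a ∧
    ∀ i, i + 2 ≤ T.codeLen r q → w (T.parent^[i] r) = b

/-- `Γ_q(a,b)` : the vertex `q` together with all descendants `r ≻ q` whose code over `q`
has the form `(a,b,b,…,b)` or `(b,a,a,…,a)`. -/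
def gammaSet (T : PTree V) (w : V → ℕ) (q : V) (a b : ℕ) : Set V :=
  {r | r = q ∨ (T.sdesc r q ∧ (T.codeAB w q a b r ∨ T.codeAB w q b a r))}

/-- `Γ(q)` : the family of the sets `Γ_q(a,b)`, `a ≠ b` in `{1,…,d}`, which are maximal
under inclusion among all such sets. -/
def gammaFam (T : PTree V) (w : V → ℕ) (d : ℕ) (q : V) : Set (Set V) :=
  {S | ∃ a b : ℕ, a ≠ b ∧ 1 ≤ a ∧ a ≤ d ∧ 1 ≤ b ∧ b ≤ d ∧ S = T.gammaSet w q a b ∧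
    ∀ a' b' : ℕ, a' ≠ b' → 1 ≤ a' → a' ≤ d → 1 ≤ b' → b' ≤ d →
      S ⊆ T.gammaSet w q a' b' → S = T.gammaSet w q a' b'}

/-- `S` is a chain rooted at `q` : it contains `q`, consists of descendants of `q`, is
closed under taking parents (down to `q`), and is totally ordered by descendancy. -/
def IsChainAt (T : PTree V) (q : V) (S : Set V) : Prop :=
  q ∈ S ∧ (∀ r ∈ S, T.desc r q) ∧ (∀ r ∈ S, r ≠ q → T.parent r ∈ S) ∧
    ∀ r ∈ S, ∀ s ∈ S, T.desc r s ∨ T.desc s r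

/-- `S` is a bi-chain rooted at `q` : the union of two chains rooted at `q`, each with at
least two vertices, whose only common vertex is `q`. -/
def IsBichainAt (T : PTree V) (q : V) (S : Set V) : Prop :=
  ∃ S₁ S₂ : Set V, T.IsChainAt q S₁ ∧ T.IsChainAt q S₂ ∧ S = S₁ ∪ S₂ ∧
    S₁ ∩ S₂ = {q} ∧ (∃ r ∈ S₁, r ≠ q) ∧ (∃ r ∈ S₂, r ≠ q)

end PTree

namespace PTree

theorem esc_depth_le {V : Type} (T : PTree V) (v : V) : T.depth (T.parent v) ≤ T.depth v := by
  by_cases h : v = T.root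
  · rw [h, T.parent_root]
  · rw [T.depth_eq v h]; omega

theorem esc_depth_iter {V : Type} (T : PTree V) (k : ℕ) (v : V) :
    T.depth (T.parent^[k] v) ≤ T.depth v := by
  induction k generalizing v with
  | zero => simp
  | succ k ih =>
    rw [Function.iterate_succ_apply]
    exact (ih _).trans (T.esc_depth_le v)

theorem esc_sdesc_depth {V : Type} (T : PTree V) {r q : V} (h : T.sdesc r q) :
    T.depth q < T.depth r := by
  obtain ⟨⟨k, hk⟩, hne⟩ := h
  have hr : r ≠ T.root := by
    rintro rfl
    exact hne (by rw [← hk, Function.iterate_fixed T.parent_root])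
  cases k with
  | zero => exact absurd hk hne
  | succ k =>
    rw [Function.iterate_succ_apply] at hk
    have := T.esc_depth_iter k (T.parent r)
    rw [hk] at this
    rw [T.depth_eq r hr]; omega

theorem esc_desc_child {V : Type} (T : PTree V) {r q p : V} (h : T.desc q p)
    (hc : T.child r q) : T.desc r p := by
  obtain ⟨k, hk⟩ := h
  exact ⟨k + 1, by rw [Function.iterate_succ_apply, hc.1, hk]⟩

theorem esc_child_depth {V : Type} (T : PTree V) {r q : V} (hc : T.child r q) :
    T.depth r = T.depth q + 1 := by
  rw [T.depth_eq r hc.2, hc.1]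

theorem esc_sub_max {V : Type} [Fintype V] (T : PTree V) (d : ℕ) (w : V → ℕ) (q : V)
    (a b : ℕ) (hab : a ≠ b) (ha : 1 ≤ a) (ha' : a ≤ d) (hb : 1 ≤ b) (hb' : b ≤ d) :
    ∃ S ∈ T.gammaFam w d q, T.gammaSet w q a b ⊆ S := by
  let F : Set (Set V) := {S | ∃ a b : ℕ, a ≠ b ∧ 1 ≤ a ∧ a ≤ d ∧ 1 ≤ b ∧ b ≤ d ∧
    S = T.gammaSet w q a b}
  have hF : F.Finite := Set.toFinite F
  obtain ⟨S, hS, hmax⟩ := hF.exists_le_maximal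
    (show T.gammaSet w q a b ∈ F from ⟨a, b, hab, ha, ha', hb, hb', rfl⟩)
  obtain ⟨x, y, h1, h2, h3, h4, h5, h6⟩ := hmax.prop
  refine ⟨S, ⟨x, y, h1, h2, h3, h4, h5, h6, ?_⟩, hS⟩
  intro a' b' g1 g2 g3 g4 g5 hsub
  exact Set.Subset.antisymm hsub (hmax.le_of_ge ⟨a', b', g1, g2, g3, g4, g5, rfl⟩ hsub)

theorem esc_weight {V : Type} [Fintype V] (T : PTree V) (d : ℕ) (w : V → ℕ)
    (hw : T.IsWeighting d w) (q r s : V) (hr : T.child r q) (hs : T.child s r)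
    (h : ∀ S ∈ T.gammaFam w d q, ¬ ({q, r, s} : Set V) ⊆ S) : w s = w r := by
  by_contra hne
  obtain ⟨S, hS, hsub⟩ := T.esc_sub_max d w q (w r) (w s) (Ne.symm hne)
    (hw.1 r hr.2).1 (hw.1 r hr.2).2 (hw.1 s hs.2).1 (hw.1 s hs.2).2
  refine h S hS (Set.Subset.trans ?_ hsub)
  have d1 := T.esc_child_depth hr
  have d2 := T.esc_child_depth hs
  have l1 : T.codeLen r q = 1 := by unfold codeLen; omega
  have l2 : T.codeLen s q = 2 := by unfold codeLen; omega
  have hrq : T.desc r q := ⟨1, hr.1⟩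
  rintro v (rfl | rfl | rfl)
  · exact Or.inl rfl
  · refine Or.inr ⟨⟨hrq, fun e => ?_⟩, Or.inl ⟨?_, ?_⟩⟩
    · rw [e] at d1; omega
    · simp [l1]
    · intro i hi; omega
  · refine Or.inr ⟨⟨T.esc_desc_child hrq hs, fun e => ?_⟩, Or.inl ⟨?_, ?_⟩⟩
    · rw [e] at d2; omega
    · simp [l2, hs.1]
    · intro i hi
      have : i = 0 := by omega
      simp [this]

theorem esc_code {V : Type} (T : PTree V) (w : V → ℕ) {p r s : V} {a b : ℕ}
    (hs : T.child s r) (hd : T.depth p + 2 ≤ T.depth r) (hws : w s = w r)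
    (h : T.codeAB w p a b r) : T.codeAB w p a b s := by
  have d2 := T.esc_child_depth hs
  have l : T.codeLen s p = T.codeLen r p + 1 := by unfold codeLen; omega
  have l2 : 2 ≤ T.codeLen r p := by unfold codeLen; omega
  refine ⟨?_, ?_⟩
  · have : T.codeLen s p - 1 = (T.codeLen r p - 1) + 1 := by omega
    rw [this, Function.iterate_succ_apply, hs.1]
    exact h.1
  · intro i hi
    cases i with
    | zero => simpa [hws] using h.2 0 (by omega)
    | succ i =>
      rw [Function.iterate_succ_apply, hs.1]
      exact h.2 i (by omega)

end PTree

/-- For every `d ≥ 2` and every `d`-weighting `α` of a finite rooted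
tree:
(i) for every vertex `q` and every child `r ∈ q⁺`, there is at most one `s ∈ r⁺` such
that the chain `{q, r, s}` is contained in no member of `Γ_α(q)`;
(ii) if the chain from `p` to `r` (where `p ≺ q`, `r ∈ q⁺`, so it has at least three
vertices) is contained in some `γ ∈ Γ_α(p)`, and `s ∈ r⁺` is such that `{q, r, s}` is
contained in no member of `Γ_α(q)`, then `s ∈ γ`. -/
theorem gammaFam_escape_properties {V : Type} [Fintype V] (T : PTree V)
    (d : ℕ) (hd : 2 ≤ d) (w : V → ℕ) (hw : T.IsWeighting d w) :
    (∀ q r s s' : V, T.child r q → T.child s r → T.child s' r →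
      (∀ S ∈ T.gammaFam w d q, ¬ ({q, r, s} : Set V) ⊆ S) →
      (∀ S ∈ T.gammaFam w d q, ¬ ({q, r, s'} : Set V) ⊆ S) → s = s') ∧
    (∀ p q r s : V, T.sdesc q p → T.child r q → T.child s r →
      (∀ S ∈ T.gammaFam w d q, ¬ ({q, r, s} : Set V) ⊆ S) →
      ∀ γ ∈ T.gammaFam w d p, {v : V | T.desc r v ∧ T.desc v p} ⊆ γ → s ∈ γ) := by
  refine ⟨?_, ?_⟩
  · intro q r s s' hr hs hs' h h'
    by_contra hne
    refine hw.2 s s' hs.2 hs'.2 (hs.1.trans hs'.1.symm) hne ?_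
    rw [T.esc_weight d w hw q r s hr hs h, T.esc_weight d w hw q r s' hr hs' h']
  · intro p q r s hqp hr hs h γ hγ hsub
    have hws := T.esc_weight d w hw q r s hr hs h
    have d0 := T.esc_sdesc_depth hqp
    have d1 := T.esc_child_depth hr
    have d2 := T.esc_child_depth hs
    have hrp := T.esc_desc_child hqp.1 hr
    have hrγ : r ∈ γ := hsub ⟨⟨0, rfl⟩, hrp⟩
    obtain ⟨a, b, -, -, -, -, -, rfl, -⟩ := hγ
    rcases hrγ with e | ⟨-, hc⟩
    · rw [e] at d1; omega
    · refine Or.inr ⟨⟨T.esc_desc_child hrp hs, fun e => ?_⟩, ?_⟩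
      · rw [e] at d2; omega
      · exact hc.imp (T.esc_code w hs (by omega) hws) (T.esc_code w hs (by omega) hws)
end

section
/- Let d ≥ 2 and let α be a d-weighting of a finite rooted tree Γ. Then there exists a 2-weighting β of Γ such that Γ_β(q) = Γ_α(q) for every vertex q if and only if Γ_α(q) has exactly one element for every vertex q; and in that case every vertex of Γ has at most two children. (Combinatorial content, via the codification of toric constellations by weighted trees, of the Theorem: the characteristic cone of a toric constellation is regular if and only if its LP-Enriques diagram is induced by a two-dimensional constellation.) -/
namespace PTree

variable {V : Type}

theorem aux_depth_parent (T : PTree V) (v : V) : T.depth (T.parent v) = T.depth v - 1 := by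
  by_cases h : v = T.root
  · subst h; rw [T.parent_root, T.depth_root]
  · have := T.depth_eq v h; omega

theorem aux_depth_iter (T : PTree V) (k : ℕ) (v : V) :
    T.depth (T.parent^[k] v) = T.depth v - k := by
  induction k generalizing v with
  | zero => rfl
  | succ k ih => rw [Function.iterate_succ_apply, ih, aux_depth_parent]; omega

theorem aux_depth_zero (T : PTree V) (v : V) (h : T.depth v = 0) : v = T.root := by
  by_contra hv
  have := T.depth_eq v hv; omega

theorem aux_sdesc (T : PTree V) {r q : V} (h : T.sdesc r q) :
    1 ≤ T.codeLen r q ∧ T.parent^[T.codeLen r q] r = q ∧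
      ∀ i, i < T.codeLen r q → T.parent^[i] r ≠ T.root := by
  obtain ⟨⟨k, hk⟩, hne⟩ := h
  have hd : T.depth q = T.depth r - k := by rw [← hk, aux_depth_iter]
  have hL : T.parent^[T.codeLen r q] r = q := by
    by_cases hkr : k ≤ T.depth r
    · have : T.codeLen r q = k := by unfold codeLen; omega
      rw [this, hk]
    · have hq := aux_depth_zero T q (by omega)
      have : T.codeLen r q = T.depth r := by unfold codeLen; omega
      rw [this, hq]
      apply aux_depth_zero
      rw [aux_depth_iter]; omega
  refine ⟨?_, hL, ?_⟩
  · by_contra h0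
    have h0 : T.codeLen r q = 0 := by omega
    rw [h0] at hL
    exact hne hL
  · intro i hi h
    have h1 := aux_depth_iter T i r
    rw [h, T.depth_root] at h1
    unfold codeLen at hi; omega

/-- Change pattern of a code. -/
def auxPat (T : PTree V) (w : V → ℕ) (q r : V) : Prop :=
  (∀ i, i + 2 < T.codeLen r q → w (T.parent^[i] r) = w (T.parent^[i+1] r)) ∧
  (∀ i, i + 2 = T.codeLen r q → w (T.parent^[i] r) ≠ w (T.parent^[i+1] r))

/-- Union of all the sets. -/
def auxP (T : PTree V) (w : V → ℕ) (q : V) : Set V := {r | r = q ∨ (T.sdesc r q ∧ T.auxPat w q r)}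

theorem aux_pat_of_code (T : PTree V) (w : V → ℕ) (q r : V) (a b : ℕ) (hab : a ≠ b)
    (h : T.codeAB w q a b r) : T.auxPat w q r := by
  obtain ⟨h1, h2⟩ := h
  refine ⟨fun i hi => ?_, fun i hi => ?_⟩
  · rw [h2 i (by omega), h2 (i+1) (by omega)]
  · have : T.codeLen r q - 1 = i + 1 := by omega
    rw [this] at h1
    rw [h2 i (by omega), h1]; exact hab.symm

theorem aux_gamma_sub (T : PTree V) (w : V → ℕ) (q : V) (a b : ℕ) (hab : a ≠ b) :
    T.gammaSet w q a b ⊆ T.auxP w q := by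
  rintro r (h | ⟨h, h1 | h1⟩)
  · exact Or.inl h
  · exact Or.inr ⟨h, aux_pat_of_code T w q r a b hab h1⟩
  · exact Or.inr ⟨h, aux_pat_of_code T w q r b a hab.symm h1⟩

theorem aux_mem_gamma (T : PTree V) (w : V → ℕ) (d : ℕ) (hd : 2 ≤ d) (hw : T.IsWeighting d w)
    (q r : V) (hr : r ∈ T.auxP w q) :
    ∃ a b : ℕ, a ≠ b ∧ 1 ≤ a ∧ a ≤ d ∧ 1 ≤ b ∧ b ≤ d ∧ r ∈ T.gammaSet w q a b := by
  rcases hr with h | ⟨h, p1, p2⟩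
  · exact ⟨1, 2, by omega, by omega, by omega, by omega, by omega, Or.inl h⟩
  · obtain ⟨hL, -, hroot⟩ := aux_sdesc T h
    have hx := hw.1 _ (hroot (T.codeLen r q - 1) (by omega))
    by_cases h2 : T.codeLen r q = 1
    · obtain ⟨b, hb, hb1, hb2⟩ : ∃ b, w (T.parent^[T.codeLen r q - 1] r) ≠ b ∧ 1 ≤ b ∧ b ≤ d := by
        by_cases hh : w (T.parent^[T.codeLen r q - 1] r) = 1
        · exact ⟨2, by omega, by omega, by omega⟩
        · exact ⟨1, by omega, by omega, by omega⟩
      exact ⟨_, b, hb, hx.1, hx.2, hb1, hb2, Or.inr ⟨h, Or.inl ⟨rfl, fun i hi => by omega⟩⟩⟩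
    · obtain ⟨n, hn⟩ : ∃ n, T.codeLen r q = n + 2 := ⟨T.codeLen r q - 2, by omega⟩
      have hy := hw.1 _ (hroot 0 (by omega))
      have hall : ∀ i, i ≤ n → w (T.parent^[i] r) = w (T.parent^[0] r) := by
        intro i
        induction i with
        | zero => intro _; rfl
        | succ i ih => intro hi; rw [← p1 i (by omega), ih (by omega)]
      have hne := p2 n (by omega)
      have e : T.codeLen r q - 1 = n + 1 := by omega
      rw [e] at hx
      refine ⟨_, _, ?_, hx.1, hx.2, hy.1, hy.2, Or.inr ⟨h, Or.inl ⟨by rw [e], ?_⟩⟩⟩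
      · rw [← hall n le_rfl]; exact hne.symm
      · intro i hi; exact hall i (by omega)

theorem aux_fam_eq [Fintype V] (T : PTree V) (w : V → ℕ) (d : ℕ) (hd : 2 ≤ d)
    (hw : T.IsWeighting d w) (q : V) (h : ∃! S : Set V, S ∈ T.gammaFam w d q) :
    T.gammaFam w d q = {T.auxP w q} := by
  obtain ⟨S, hS, huniq⟩ := h
  have key : S = T.auxP w q := by
    apply Set.Subset.antisymm
    · obtain ⟨a, b, hab, -, -, -, -, rfl, -⟩ := hS
      exact aux_gamma_sub T w q a b hab
    · intro r hr
      obtain ⟨a, b, hab, ha, ha', hb, hb', hmem⟩ := aux_mem_gamma T w d hd hw q r hr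
      let F : Set (Set V) := {X | ∃ a b : ℕ, a ≠ b ∧ 1 ≤ a ∧ a ≤ d ∧ 1 ≤ b ∧ b ≤ d ∧
        X = T.gammaSet w q a b}
      obtain ⟨M, hM1, hM2⟩ := (Set.toFinite F).exists_le_maximal
        (show T.gammaSet w q a b ∈ F from ⟨a, b, hab, ha, ha', hb, hb', rfl⟩)
      obtain ⟨c, e, hce, hc, hc', he, he', hM⟩ := hM2.prop
      have : M ∈ T.gammaFam w d q := by
        refine ⟨c, e, hce, hc, hc', he, he', hM, ?_⟩
        intro a' b' h1 h2 h3 h4 h5 hsub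
        exact hM2.eq_of_subset ⟨a', b', h1, h2, h3, h4, h5, rfl⟩ hsub
      rw [← huniq M this]
      exact hM1 hmem
  ext X
  constructor
  · intro hX; rw [← key]; exact huniq X hX
  · rintro rfl; rw [← key]; exact hS

theorem aux_two (T : PTree V) (w : V → ℕ) (q : V) : ∃! S : Set V, S ∈ T.gammaFam w 2 q := by
  have hsymm : T.gammaSet w q 2 1 = T.gammaSet w q 1 2 := by
    ext r; simp only [gammaSet, Set.mem_setOf_eq]; tauto
  have hall : ∀ a b : ℕ, a ≠ b → 1 ≤ a → a ≤ 2 → 1 ≤ b → b ≤ 2 →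
      T.gammaSet w q a b = T.gammaSet w q 1 2 := by
    intro a b h h1 h2 h3 h4
    have : (a = 1 ∧ b = 2) ∨ (a = 2 ∧ b = 1) := by omega
    rcases this with ⟨rfl, rfl⟩ | ⟨rfl, rfl⟩
    · rfl
    · exact hsymm
  refine ⟨T.gammaSet w q 1 2, ⟨1, 2, by omega, by omega, by omega, by omega, by omega, rfl, ?_⟩, ?_⟩
  · intro a b h h1 h2 h3 h4 _; exact (hall a b h h1 h2 h3 h4).symm
  · rintro X ⟨a, b, h, h1, h2, h3, h4, rfl, -⟩; exact hall a b h h1 h2 h3 h4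

theorem aux_child (T : PTree V) (s q : V) (h : T.child s q) :
    T.sdesc s q ∧ T.codeLen s q = 1 := by
  obtain ⟨rfl, h2⟩ := h
  have := T.depth_eq s h2
  refine ⟨⟨⟨1, rfl⟩, fun e => ?_⟩, by unfold codeLen; omega⟩
  rw [← e] at this; omega

theorem aux_local [Fintype V] (T : PTree V) (w : V → ℕ) (d : ℕ) (hd : 2 ≤ d)
    (hw : T.IsWeighting d w) (q : V) (h : ∃! S : Set V, S ∈ T.gammaFam w d q) :
    ∃ a b : ℕ, a ≠ b ∧ T.auxP w q = T.gammaSet w q a b ∧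
      ∀ s, T.child s q → w s = a ∨ w s = b := by
  have hf := aux_fam_eq T w d hd hw q h
  have hm : T.auxP w q ∈ T.gammaFam w d q := by rw [hf]; rfl
  obtain ⟨a, b, hab, -, -, -, -, hS, -⟩ := hm
  refine ⟨a, b, hab, hS, fun s hs => ?_⟩
  obtain ⟨h1, h2⟩ := aux_child T s q hs
  have hsP : s ∈ T.auxP w q :=
    Or.inr ⟨h1, fun i hi => by omega, fun i hi => by omega⟩
  rw [hS] at hsP
  rcases hsP with e | ⟨-, ⟨e, -⟩ | ⟨e, -⟩⟩
  · exact absurd e h1.2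
  · rw [h2] at e; exact Or.inl e
  · rw [h2] at e; exact Or.inr e

theorem aux_sibling [Fintype V] (T : PTree V) (w : V → ℕ) (d : ℕ) (hd : 2 ≤ d)
    (hw : T.IsWeighting d w) (h : ∀ q, ∃! S : Set V, S ∈ T.gammaFam w d q)
    (p r s : V) (hp : p ≠ T.root) (hr : T.child r p) (hs : T.child s p)
    (hr' : w r ≠ w p) (hs' : w s ≠ w p) : w r = w s := by
  obtain ⟨a, b, hab, hP, -⟩ := aux_local T w d hd hw (T.parent p) (h _)
  have key : ∀ t, T.child t p → w t ≠ w p → (w p = a ∧ w t = b) ∨ (w p = b ∧ w t = a) := by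
    intro t ht htp
    have d1 := T.depth_eq p hp
    have d2 := T.depth_eq t ht.2
    rw [ht.1] at d2
    have hL : T.codeLen t (T.parent p) = 2 := by unfold codeLen; omega
    have hsd : T.sdesc t (T.parent p) := by
      refine ⟨⟨2, by simp [ht.1]⟩, fun e => ?_⟩
      rw [← e] at d1; omega
    have hmem : t ∈ T.auxP w (T.parent p) := by
      refine Or.inr ⟨hsd, fun i hi => by omega, fun i hi => ?_⟩
      obtain rfl : i = 0 := by omega
      simpa [ht.1] using htp
    rw [hP] at hmem
    rcases hmem with e | ⟨-, ⟨e1, e2⟩ | ⟨e1, e2⟩⟩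
    · exact absurd e hsd.2
    · have e2 := e2 0 (by omega)
      rw [hL] at e1
      simp [ht.1] at e1 e2
      exact Or.inl ⟨e1, e2⟩
    · have e2 := e2 0 (by omega)
      rw [hL] at e1
      simp [ht.1] at e1 e2
      exact Or.inr ⟨e1, e2⟩
  have := key r hr hr'
  have := key s hs hs'
  omega

/-- Auxiliary recursion for the 2-weighting. -/
def auxG (T : PTree V) (w : V → ℕ) (a : ℕ) : ℕ → V → ℕ
  | 0, v => if w v = a then 1 else 2
  | n + 1, v => if w v = w (T.parent v) then auxG T w a n (T.parent v)
      else 3 - auxG T w a n (T.parent v)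

theorem auxG_range (T : PTree V) (w : V → ℕ) (a : ℕ) (n : ℕ) (v : V) :
    1 ≤ auxG T w a n v ∧ auxG T w a n v ≤ 2 := by
  induction n generalizing v with
  | zero => unfold auxG; split_ifs <;> omega
  | succ n ih => have := ih (T.parent v); unfold auxG; split_ifs <;> omega

/-- The 2-weighting. -/
def auxB (T : PTree V) (w : V → ℕ) (a : ℕ) (v : V) : ℕ := auxG T w a (T.depth v - 1) v

theorem auxB_range (T : PTree V) (w : V → ℕ) (a : ℕ) (v : V) :
    1 ≤ auxB T w a v ∧ auxB T w a v ≤ 2 := auxG_range T w a _ v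

theorem auxB_step (T : PTree V) (w : V → ℕ) (a : ℕ) (v : V) (hv : v ≠ T.root)
    (hp : T.parent v ≠ T.root) :
    auxB T w a v = if w v = w (T.parent v) then auxB T w a (T.parent v)
      else 3 - auxB T w a (T.parent v) := by
  have d1 := T.depth_eq v hv
  have d2 := T.depth_eq _ hp
  have e : T.depth v - 1 = (T.depth (T.parent v) - 1) + 1 := by omega
  unfold auxB
  rw [e, auxG]

theorem auxB_eq_iff (T : PTree V) (w : V → ℕ) (a : ℕ) (v : V) (hv : v ≠ T.root)
    (hp : T.parent v ≠ T.root) :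
    auxB T w a v = auxB T w a (T.parent v) ↔ w v = w (T.parent v) := by
  have h := auxB_step T w a v hv hp
  have := auxB_range T w a (T.parent v)
  split_ifs at h with h1
  · exact ⟨fun _ => h1, fun _ => h⟩
  · exact ⟨fun _ => by omega, fun e => absurd e h1⟩

theorem auxP_eq (T : PTree V) (w : V → ℕ) (a : ℕ) (q : V) :
    T.auxP (auxB T w a) q = T.auxP w q := by
  ext r
  refine or_congr Iff.rfl (and_congr_right fun h => ?_)
  obtain ⟨-, -, hroot⟩ := aux_sdesc T h
  have key : ∀ i, i + 2 ≤ T.codeLen r q →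
      (auxB T w a (T.parent^[i] r) = auxB T w a (T.parent^[i+1] r) ↔
        w (T.parent^[i] r) = w (T.parent^[i+1] r)) := by
    intro i hi
    have h1 := hroot i (by omega)
    have h2 := hroot (i+1) (by omega)
    rw [Function.iterate_succ_apply'] at h2 ⊢
    exact auxB_eq_iff T w a _ h1 h2
  refine and_congr ?_ ?_
  · exact forall_congr' fun i => forall_congr' fun hi => key i (by omega)
  · exact forall_congr' fun i => forall_congr' fun hi => not_congr (key i (by omega))

theorem auxB_weighting [Fintype V] (T : PTree V) (w : V → ℕ) (d : ℕ) (hd : 2 ≤ d)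
    (hw : T.IsWeighting d w) (h : ∀ q, ∃! S : Set V, S ∈ T.gammaFam w d q)
    (a b : ℕ) (hroot : ∀ s, T.child s T.root → w s = a ∨ w s = b) :
    T.IsWeighting 2 (auxB T w a) := by
  refine ⟨fun v _ => auxB_range T w a v, fun r s hr hs hrs hne => ?_⟩
  have hwne := hw.2 r s hr hs hrs hne
  by_cases hp : T.parent r = T.root
  · have d1 := T.depth_eq r hr
    have d2 := T.depth_eq s hs
    rw [← hrs] at d2
    rw [hp, T.depth_root] at d1 d2
    have h1 := hroot r ⟨hp, hr⟩
    have h2 := hroot s ⟨by rw [← hrs, hp], hs⟩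
    unfold auxB
    rw [d1, d2]
    simp only [Nat.zero_add, Nat.sub_self, auxG]
    split_ifs <;> omega
  · have e1 := auxB_step T w a r hr hp
    have e2 := auxB_step T w a s hs (by rw [← hrs]; exact hp)
    rw [← hrs] at e2
    have hsib := aux_sibling T w d hd hw h (T.parent r) r s hp ⟨rfl, hr⟩ ⟨hrs.symm, hs⟩
    have := auxB_range T w a (T.parent r)
    split_ifs at e1 e2 with h1 h2 h2
    · omega
    · omega
    · omega
    · exact absurd (hsib h1 h2) hwne

end PTree

/-- Let `d ≥ 2` and let `α` be a `d`-weighting of a finite rooted tree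
`Γ`.  Then there exists a `2`-weighting `β` of `Γ` with `Γ_β(q) = Γ_α(q)` for every
vertex `q` if and only if `Γ_α(q)` has exactly one element for every vertex `q`; and in
that case every vertex of `Γ` has at most two children.  (Combinatorial content of: the
characteristic cone of a toric constellation is regular iff its LP-Enriques diagram is
induced by a two-dimensional constellation.) -/
theorem LPEnriques_two_dimensional_iff {V : Type} [Fintype V] (T : PTree V)
    (d : ℕ) (hd : 2 ≤ d) (w : V → ℕ) (hw : T.IsWeighting d w) :
    ((∃ w2 : V → ℕ, T.IsWeighting 2 w2 ∧ ∀ q : V, T.gammaFam w2 2 q = T.gammaFam w d q) ↔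
      ∀ q : V, ∃! S : Set V, S ∈ T.gammaFam w d q) ∧
    ((∀ q : V, ∃! S : Set V, S ∈ T.gammaFam w d q) →
      ∀ q s₁ s₂ s₃ : V, T.child s₁ q → T.child s₂ q → T.child s₃ q →
        s₁ = s₂ ∨ s₁ = s₃ ∨ s₂ = s₃) := by
  refine ⟨⟨?_, ?_⟩, ?_⟩
  · rintro ⟨w2, -, h⟩ q
    rw [← h q]
    exact T.aux_two w2 q
  · intro h
    obtain ⟨a, b, -, -, hroot⟩ := T.aux_local w d hd hw T.root (h _)
    have hB := T.auxB_weighting w d hd hw h a b hroot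
    refine ⟨T.auxB w a, hB, fun q => ?_⟩
    rw [T.aux_fam_eq _ 2 le_rfl hB q (T.aux_two _ q), T.aux_fam_eq w d hd hw q (h q), T.auxP_eq]
  · intro h q s₁ s₂ s₃ h1 h2 h3
    obtain ⟨a, b, -, -, hc⟩ := T.aux_local w d hd hw q (h q)
    have c1 := hc _ h1
    have c2 := hc _ h2
    have c3 := hc _ h3
    by_contra! hne
    obtain ⟨n1, n2, n3⟩ := hne
    have k1 := hw.2 s₁ s₂ h1.2 h2.2 (h1.1.trans h2.1.symm) n1
    have k2 := hw.2 s₁ s₃ h1.2 h3.2 (h1.1.trans h3.1.symm) n2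
    have k3 := hw.2 s₂ s₃ h2.2 h3.2 (h2.1.trans h3.1.symm) n3
    omega
end

section
/- Let V be a finite set equipped with a partial order ≤ and a binary relation ↠ such that R ↠ P implies P < R, and let M be the integer square matrix indexed by V determined by M_{QQ} = 1 for all Q, M_{PQ} = 0 whenever P ≠ Q and ¬(P ≤ Q), and M_{PQ} = Σ_{R ∈ V, R ≤ Q, R ↠ P} M_{RQ} whenever P < Q. If m and r are integer vectors indexed by V with m = M·r, then for every Q ∈ V one has r_Q = m_Q − Σ_{P ↠ Q} m_P. (This is the formula for the exponents of the factorization of a toric finitely supported complete ideal with weights m_Q into the special *-simple ideals: r_Q = m_Q − Σ_{P ↠ Q} m_P.) -/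
/-- Let `V` be a finite set with a partial order `≤` and a binary
relation `↠` (`lp`) such that `R ↠ P` implies `P < R`, and let `M` be the matrix
determined by `M Q Q = 1`, `M P Q = 0` if `P ≠ Q` and `¬ P ≤ Q`, and
`M P Q = ∑_{R ≤ Q, R ↠ P} M R Q` if `P < Q`.  If `m` and `r` are integer vectors with
`m = M · r`, then for every `Q` one has `r Q = m Q − ∑_{P ↠ Q} m P`.  (Formula for the
exponents of the factorization into special *-simple ideals.) -/
theorem special_simple_factorization_exponents
    {V : Type} [Fintype V] [DecidableEq V] [PartialOrder V]
    [DecidableRel ((· ≤ ·) : V → V → Prop)]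
    (lp : V → V → Prop) [DecidableRel lp] (hlp : ∀ R P, lp R P → P < R)
    (M : Matrix V V ℤ)
    (hMdiag : ∀ Q, M Q Q = 1)
    (hMzero : ∀ P Q, P ≠ Q → ¬ P ≤ Q → M P Q = 0)
    (hMrec : ∀ P Q, P < Q →
      M P Q = ∑ R ∈ Finset.univ.filter (fun R => R ≤ Q ∧ lp R P), M R Q)
    (m r : V → ℤ) (hm : ∀ P, m P = ∑ Q : V, M P Q * r Q) :
    ∀ Q : V, r Q = m Q - ∑ P ∈ Finset.univ.filter (fun P => lp P Q), m P := by
  intro Q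
  have hz : ∀ R S, ¬ R ≤ S → M R S = 0 := fun R S h =>
    hMzero R S (fun e => h (le_of_eq e)) h
  have key : ∀ S, M Q S - ∑ R ∈ Finset.univ.filter (fun R => lp R Q), M R S
      = if Q = S then 1 else 0 := by
    intro S
    by_cases hlt : Q < S
    · rw [if_neg hlt.ne, hMrec Q S hlt, sub_eq_zero]
      apply Finset.sum_subset
      · intro R hR
        simp only [Finset.mem_filter, Finset.mem_univ, true_and] at hR ⊢
        exact hR.2
      · intro R hR hR'
        simp only [Finset.mem_filter, Finset.mem_univ, true_and] at hR hR'
        exact hz R S (fun h => hR' ⟨h, hR⟩)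
    · have h0 : ∑ R ∈ Finset.univ.filter (fun R => lp R Q), M R S = 0 := by
        apply Finset.sum_eq_zero
        intro R hR
        simp only [Finset.mem_filter, Finset.mem_univ, true_and] at hR
        exact hz R S (fun h => hlt (lt_of_lt_of_le (hlp R Q hR) h))
      rw [h0, sub_zero]
      split_ifs with e
      · rw [← e, hMdiag]
      · exact hz Q S (fun h => hlt (lt_of_le_of_ne h e))
  simp only [hm]
  rw [Finset.sum_comm, ← Finset.sum_sub_distrib]
  simp only [← Finset.sum_mul, ← sub_mul, key]
  simp
end

section
/- Let n ≥ 1 and let G be an additive submonoid of ℤⁿ. Call an element g ∈ G \ {0} extremal if g has no additive inverse in G and, whenever k·g = a + b with k a positive integer and a, b ∈ G, there exist positive integers s, t and non-negative integers q, p with s·a = q·g and t·b = p·g. Call two extremal elements x, y equivalent if m·x = k·y for some positive integers m, k. Say that G is semi-factorial if for every g ∈ G \ {0} there is a positive integer k such that k·g is a finite sum of extremal elements, and this factorization is unique in the following sense: if k·g = a₁ + ⋯ + a_s and k'·g = b₁ + ⋯ + b_t with k, k' positive integers, all a_i and all b_j extremal, the a_i pairwise non-equivalent and the b_j pairwise non-equivalent,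 then s = t and, after reindexing, a_i is equivalent to b_i for each i. Then G is semi-factorial if and only if the convex cone generated by G in ℝⁿ (the set of all finite non-negative real linear combinations of elements of G) is simplicial, i.e. equals the set of non-negative real linear combinations of some linearly independent family of vectors of ℝⁿ. -/
/-- An element `g ∈ G \ {0}` of an additive submonoid `G` of `ℤⁿ` is extremal if it has
no additive inverse in `G` and whenever `k • g = a + b` with `k` a positive integer and
`a, b ∈ G`, there exist positive integers `s, t` and non-negative integers `q, p` with
`s • a = q • g` and `t • b = p • g`. -/
def ExtremalElt {n : ℕ} (G : AddSubmonoid (Fin n → ℤ)) (g : Fin n → ℤ) : Prop :=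
  g ∈ G ∧ g ≠ 0 ∧ (¬ ∃ h ∈ G, g + h = 0) ∧
    ∀ k : ℕ, 0 < k → ∀ a b : Fin n → ℤ, a ∈ G → b ∈ G → k • g = a + b →
      ∃ s t q p : ℕ, 0 < s ∧ 0 < t ∧ s • a = q • g ∧ t • b = p • g

/-- Two elements are equivalent if positive integer multiples of them agree. -/
def EquivExtremal {n : ℕ} (x y : Fin n → ℤ) : Prop :=
  ∃ m k : ℕ, 0 < m ∧ 0 < k ∧ m • x = k • y

/-- `G` is semi-factorial: every non-zero `g ∈ G` has a positive multiple which is a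
finite sum of extremal elements, and this factorization is unique, in the sense that any
two such factorizations into pairwise non-equivalent extremal elements have the same
number of summands and, after reindexing, pairwise equivalent summands. -/
def SemiFactorial {n : ℕ} (G : AddSubmonoid (Fin n → ℤ)) : Prop :=
  ∀ g ∈ G, g ≠ 0 →
    (∃ k : ℕ, 0 < k ∧ ∃ (s : ℕ) (a : Fin s → (Fin n → ℤ)),
      (∀ i, ExtremalElt G (a i)) ∧ k • g = ∑ i, a i) ∧
    (∀ k k' : ℕ, 0 < k → 0 < k' →
      ∀ (s t : ℕ) (a : Fin s → (Fin n → ℤ)) (b : Fin t → (Fin n → ℤ)),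
        (∀ i, ExtremalElt G (a i)) → (∀ j, ExtremalElt G (b j)) →
        (∀ i i', i ≠ i' → ¬ EquivExtremal (a i) (a i')) →
        (∀ j j', j ≠ j' → ¬ EquivExtremal (b j) (b j')) →
        k • g = ∑ i, a i → k' • g = ∑ j, b j →
        ∃ σ : Fin s ≃ Fin t, ∀ i, EquivExtremal (a i) (b (σ i)))

/-- The convex cone generated by `G` in `ℝⁿ`: all finite non-negative real linear
combinations of elements of `G`. -/
def coneOf {n : ℕ} (G : AddSubmonoid (Fin n → ℤ)) : Set (Fin n → ℝ) :=
  {x | ∃ (m : ℕ) (c : Fin m → ℝ) (v : Fin m → (Fin n → ℤ)),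
    (∀ i, 0 ≤ c i) ∧ (∀ i, v i ∈ G) ∧
      x = ∑ i, c i • (fun j => ((v i j : ℤ) : ℝ))}

/-- A subset of `ℝⁿ` is a simplicial cone if it is the set of non-negative real linear
combinations of some linearly independent family of vectors. -/
def IsSimplicialCone {n : ℕ} (C : Set (Fin n → ℝ)) : Prop :=
  ∃ (m : ℕ) (v : Fin m → (Fin n → ℝ)), LinearIndependent ℝ v ∧
    C = {x | ∃ c : Fin m → ℝ, (∀ i, 0 ≤ c i) ∧ x = ∑ i, c i • v i}

namespace SFS

/-- cast -/
def toR (n : ℕ) : (Fin n → ℤ) →+ (Fin n → ℝ) where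
  toFun v := fun j => ((v j : ℤ) : ℝ)
  map_zero' := by ext; simp
  map_add' := by intros; ext; simp

lemma toR_inj (n : ℕ) : Function.Injective (toR n) := by
  intro a b h
  ext j
  have := congrFun h j
  simpa [toR] using this

lemma toR_apply {n : ℕ} (v : Fin n → ℤ) (j : Fin n) : toR n v j = (v j : ℝ) := rfl

/-- a rational-valued functional turns real relations into rational ones -/
lemma functional_rel {n m : ℕ} (w : Fin m → Fin n → ℤ) (g : Fin n → ℤ) (d : ℝ) (c : Fin m → ℝ)
    (φ : ℝ →ₗ[ℚ] ℚ) (h : d • toR n g = ∑ i, c i • toR n (w i)) :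
    ((φ d : ℚ) : ℝ) • toR n g = ∑ i, ((φ (c i) : ℚ) : ℝ) • toR n (w i) := by
  ext j
  have h1 := congrFun h j
  simp only [Pi.smul_apply, Finset.sum_apply, smul_eq_mul, toR_apply] at h1 ⊢
  have key : ∀ (x : ℝ) (z : ℤ), φ (x * z) = φ x * z := by
    intro x z
    have : x * (z : ℝ) = z • x := by simp [mul_comm]
    rw [this, map_zsmul]; simp [mul_comm]
  have h2 := congrArg φ h1
  rw [map_sum] at h2
  simp only [key] at h2
  exact_mod_cast h2

lemma common_den {m : ℕ} (q : Fin m → ℚ) : ∃ k : ℕ, 0 < k ∧ ∃ z : Fin m → ℤ,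
    ∀ i, (k : ℚ) * q i = z i := by
  refine ⟨∏ i, (q i).den, Finset.prod_pos fun i _ => (q i).den_pos, ?_⟩
  have : ∀ i, ∃ z : ℤ, ((∏ i, (q i).den : ℕ) : ℚ) * q i = z := by
    intro i
    obtain ⟨t, ht⟩ := Finset.dvd_prod_of_mem (fun i => (q i).den) (Finset.mem_univ i)
    refine ⟨t * (q i).num, ?_⟩
    rw [ht]
    push_cast
    have := Rat.den_mul_eq_num (q i)
    linear_combination (t : ℚ) * this
  choose z hz using this
  exact ⟨z, hz⟩

lemma rat_comb {n m : ℕ} (w : Fin m → Fin n → ℤ) (hw : LinearIndependent ℝ fun i => toR n (w i))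
    (g : Fin n → ℤ) (c : Fin m → ℝ) (hc : ∀ i, 0 ≤ c i)
    (h : toR n g = ∑ i, c i • toR n (w i)) :
    ∃ k : ℕ, 0 < k ∧ ∃ N : Fin m → ℕ, k • g = ∑ i, N i • w i := by
  obtain ⟨φ, hφ⟩ : ∃ φ : ℝ →ₗ[ℚ] ℚ, φ 1 = 1 := by
    have : ¬ ∀ φ : Module.Dual ℚ ℝ, φ 1 = 0 := by
      rw [Module.forall_dual_apply_eq_zero_iff]; exact one_ne_zero
    push Not at this
    obtain ⟨φ, h⟩ := this
    exact ⟨(φ 1)⁻¹ • φ, by simp [h]⟩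
  have h1 := functional_rel w g 1 c φ (by simpa using h)
  rw [hφ, Rat.cast_one, one_smul, h] at h1
  have h2 : ∀ i, c i = (φ (c i) : ℚ) := by
    have h3 : ∑ i, (c i - (φ (c i) : ℚ)) • toR n (w i) = 0 := by
      simp only [sub_smul, Finset.sum_sub_distrib]
      rw [h1, sub_self]
    intro i
    have := Fintype.linearIndependent_iff.1 hw _ h3 i
    linarith
  obtain ⟨k, hk, z, hz⟩ := common_den fun i => φ (c i)
  have hz' : ∀ i, (k : ℝ) * c i = z i := by
    intro i
    rw [h2 i]
    exact_mod_cast hz i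
  have hz0 : ∀ i, 0 ≤ z i := by
    intro i
    have : (0 : ℝ) ≤ z i := by rw [← hz' i]; exact mul_nonneg (by positivity) (hc i)
    exact_mod_cast this
  refine ⟨k, hk, fun i => (z i).toNat, ?_⟩
  apply toR_inj
  rw [map_nsmul, map_sum, h, Finset.smul_sum]
  refine Finset.sum_congr rfl fun i _ => ?_
  rw [map_nsmul, ← Nat.cast_smul_eq_nsmul ℝ, ← Nat.cast_smul_eq_nsmul ℝ, smul_smul, hz' i]
  congr 1
  have := Int.toNat_of_nonneg (hz0 i)
  exact_mod_cast this.symm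

lemma linInd_of_int {n m : ℕ} (w : Fin m → Fin n → ℤ)
    (hw : ∀ z : Fin m → ℤ, ∑ i, z i • w i = 0 → z = 0) :
    LinearIndependent ℝ fun i => toR n (w i) := by
  rw [Fintype.linearIndependent_iff]
  intro c hc i
  by_contra hne
  have : ¬ ∀ φ : Module.Dual ℚ ℝ, φ (c i) = 0 := by
    rw [Module.forall_dual_apply_eq_zero_iff]; exact hne
  push Not at this
  obtain ⟨φ, hφ⟩ := this
  have h1 := functional_rel w 0 0 c φ (by simpa using hc.symm)
  simp only [map_zero, Rat.cast_zero, smul_zero] at h1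
  obtain ⟨k, hk, z, hz⟩ := common_den fun i => φ (c i)
  have h2 : ∑ i, z i • w i = 0 := by
    apply toR_inj
    rw [map_sum, map_zero]
    have h3 := congrArg (fun v => (k : ℝ) • v) h1
    simp only [smul_zero, Finset.smul_sum, smul_smul] at h3
    rw [h3]
    refine Finset.sum_congr rfl fun i _ => ?_
    rw [map_zsmul, ← Int.cast_smul_eq_zsmul ℝ]
    congr 1
    exact_mod_cast (hz i).symm
  have h4 := congrFun (hw z h2) i
  have h5 := hz i
  rw [h4] at h5
  simp at h5
  rcases h5 with h5 | h5
  · omega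
  · exact hφ h5

variable {n : ℕ}

lemma nsmul_cancel {k : ℕ} (hk : 0 < k) {x y : Fin n → ℤ} (h : k • x = k • y) : x = y := by
  ext j
  have := congrFun h j
  simp only [Pi.smul_apply, nsmul_eq_mul] at this
  exact mul_left_cancel₀ (by exact_mod_cast hk.ne') this

lemma eqv_symm {x y : Fin n → ℤ} (h : EquivExtremal x y) : EquivExtremal y x := by
  obtain ⟨m, k, hm, hk, h⟩ := h
  exact ⟨k, m, hk, hm, h.symm⟩

lemma eqv_trans {x y z : Fin n → ℤ} (h : EquivExtremal x y) (h' : EquivExtremal y z) :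
    EquivExtremal x z := by
  obtain ⟨m, k, hm, hk, h⟩ := h
  obtain ⟨m', k', hm', hk', h'⟩ := h'
  refine ⟨m' * m, k * k', by positivity, by positivity, ?_⟩
  rw [mul_smul, h, mul_smul, ← h', smul_comm]

lemma ext_smul {G : AddSubmonoid (Fin n → ℤ)} {a : Fin n → ℤ} (ha : ExtremalElt G a) {N : ℕ}
    (hN : 0 < N) : ExtremalElt G (N • a) := by
  obtain ⟨h1, h2, h3, h4⟩ := ha
  have h5 : ¬ ∃ h ∈ G, N • a + h = 0 := by
    rintro ⟨h, hh, e⟩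
    refine h3 ⟨(N - 1) • a + h, G.add_mem (G.nsmul_mem h1 _) hh, ?_⟩
    rw [← e, ← add_assoc]
    congr 1
    obtain ⟨M, rfl⟩ : ∃ M, N = M + 1 := ⟨N - 1, by omega⟩
    rw [Nat.add_sub_cancel, succ_nsmul']
  refine ⟨G.nsmul_mem h1 _, ?_, h5, ?_⟩
  · intro e
    exact h5 ⟨0, G.zero_mem, by rw [e, add_zero]⟩
  · intro k hk x y hx hy e
    obtain ⟨s, t, q, p, hs, ht, e1, e2⟩ := h4 (k * N) (by positivity) x y hx hy
      (by rw [mul_smul, e])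
    refine ⟨N * s, N * t, q, p, by positivity, by positivity, ?_, ?_⟩
    · rw [mul_smul, e1, smul_comm]
    · rw [mul_smul, e2, smul_comm]

section back
variable {m : ℕ} {G : AddSubmonoid (Fin n → ℤ)} {w : Fin m → Fin n → ℤ}

lemma w_ext (hwG : ∀ i, w i ∈ G)
    (hinj : ∀ N M : Fin m → ℕ, ∑ i, N i • w i = ∑ i, M i • w i → N = M)
    (hgen : ∀ g ∈ G, ∃ k : ℕ, 0 < k ∧ ∃ N : Fin m → ℕ, k • g = ∑ i, N i • w i) (i : Fin m) :
    ExtremalElt G (w i) := by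
  have hsing : ∀ r : ℕ, r • w i = ∑ j, (Pi.single i r : Fin m → ℕ) j • w j := by
    intro r
    rw [Finset.sum_eq_single i]
    · simp
    · intro b _ hb; simp [hb]
    · simp
  -- main computation
  have main : ∀ (k : ℕ) (a b : Fin n → ℤ), a ∈ G → b ∈ G → k • w i = a + b →
      ∃ s t q p : ℕ, 0 < s ∧ 0 < t ∧ s • a = q • w i ∧ t • b = p • w i ∧ q * t + p * s = k * (s * t) := by
    intro k a b ha hb e
    obtain ⟨s, hs, N, hN⟩ := hgen a ha
    obtain ⟨t, ht, M, hM⟩ := hgen b hb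
    have h1 : (fun j => t * N j + s * M j) = (Pi.single i (k * (s * t)) : Fin m → ℕ) := by
      apply hinj
      rw [← hsing, mul_comm, mul_smul, e]
      simp only [add_smul, mul_smul, Finset.sum_add_distrib, ← Finset.smul_sum, smul_add]
      rw [← hN, ← hM, smul_comm t s a]
    have hN0 : N = Pi.single i (N i) := by
      ext j
      by_cases hj : j = i
      · subst hj; simp
      · have := congrFun h1 j
        simp [hj] at this
        simp [hj]; omega
    have hM0 : M = Pi.single i (M i) := by
      ext j
      by_cases hj : j = i
      · subst hj; simp
      · have := congrFun h1 j
        simp [hj] at this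
        simp [hj]; omega
    refine ⟨s, t, N i, M i, hs, ht, ?_, ?_, ?_⟩
    · rw [hN, hsing, ← hN0]
    · rw [hM, hsing, ← hM0]
    · have := congrFun h1 i
      simp at this
      rw [← this]; ring
  have hnz : ∀ r : ℕ, r • w i = 0 → r = 0 := by
    intro r hr
    have := hinj (Pi.single i r) 0 (by rw [← hsing, hr]; simp)
    simpa using congrFun this i
  have hinv : ¬ ∃ h ∈ G, w i + h = 0 := by
    rintro ⟨h, hh, e⟩
    obtain ⟨s, t, q, p, hs, ht, e1, e2, e3⟩ := main 0 (w i) h (hwG i) hh (by rw [e, zero_smul])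
    have : q = 0 := by
      simp at e3
      rcases e3.1 with h | h <;> omega
    rw [this, zero_smul] at e1
    have := hnz s e1
    omega
  refine ⟨hwG i, ?_, hinv, ?_⟩
  · intro e
    have := hnz 1 (by rw [e, smul_zero])
    omega
  · intro k hk a b ha hb e
    obtain ⟨s, t, q, p, hs, ht, e1, e2, -⟩ := main k a b ha hb e
    exact ⟨s, t, q, p, hs, ht, e1, e2⟩

lemma ext_eqv (hwG : ∀ i, w i ∈ G)
    (hwe : ∀ i, ExtremalElt G (w i))
    (hgen : ∀ g ∈ G, ∃ k : ℕ, 0 < k ∧ ∃ N : Fin m → ℕ, k • g = ∑ i, N i • w i)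
    {a : Fin n → ℤ} (ha : ExtremalElt G a) : ∃ j, EquivExtremal a (w j) := by
  obtain ⟨k, hk, N, hN⟩ := hgen a ha.1
  have : ∃ j, N j ≠ 0 := by
    by_contra hcon
    push Not at hcon
    simp only [hcon, zero_smul, Finset.sum_const_zero] at hN
    exact (ext_smul ha hk).2.1 hN
  obtain ⟨j, hj⟩ := this
  rw [← Finset.add_sum_erase _ _ (Finset.mem_univ j)] at hN
  obtain ⟨s, t, q, p, hs, ht, e1, e2⟩ := ha.2.2.2 k hk _ _ (G.nsmul_mem (hwG j) _)
    (G.sum_mem fun i _ => G.nsmul_mem (hwG i) (N i)) hN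
  refine ⟨j, q, s * N j, ?_, by positivity, ?_⟩
  · rcases Nat.eq_zero_or_pos q with h | h
    · rw [h, zero_smul, smul_smul] at e1
      exact absurd e1 (ext_smul (hwe j) (by positivity)).2.1
    · exact h
  · rw [← e1, smul_smul]

lemma supp_eq (hinj : ∀ N M : Fin m → ℕ, ∑ i, N i • w i = ∑ i, M i • w i → N = M)
    {g : Fin n → ℤ} {k₀ : ℕ} (hk₀ : 0 < k₀) {N : Fin m → ℕ} (hN : k₀ • g = ∑ i, N i • w i)
    {k s : ℕ} (hk : 0 < k) {a : Fin s → Fin n → ℤ} (hg : k • g = ∑ i, a i) {f : Fin s → Fin m}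
    (hf : ∀ i, EquivExtremal (a i) (w (f i))) : Set.range f = {j | N j ≠ 0} := by
  choose x y hx hy hxy using hf
  have hP : 0 < ∏ i, x i := Finset.prod_pos fun i _ => hx i
  have : ∀ i, ∃ r : ℕ, 0 < r ∧ (∏ i, x i) • a i = r • w (f i) := by
    intro i
    obtain ⟨t, ht⟩ := Finset.dvd_prod_of_mem x (Finset.mem_univ i)
    refine ⟨t * y i, ?_, ?_⟩
    · have := hy i
      rcases Nat.eq_zero_or_pos t with h | h
      · simp only [h, mul_zero] at ht; omega
      · positivity
    · rw [ht, mul_comm, mul_smul, hxy, mul_smul]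
  choose r hr hra using this
  set P := ∏ i, x i
  have h1 : (P * k) • g = ∑ j, (∑ i, if f i = j then r i else 0) • w j := by
    rw [mul_smul, hg, Finset.smul_sum]
    simp only [hra, Finset.sum_smul]
    rw [Finset.sum_comm]
    refine Finset.sum_congr rfl fun i _ => ?_
    simp [ite_smul]
  have h2 : (fun j => k₀ * ∑ i, if f i = j then r i else 0) = fun j => (P * k) * N j := by
    apply hinj
    simp only [mul_smul _ _ (w _), ← Finset.smul_sum]
    rw [← hN, ← h1, smul_comm]
  ext j
  have h3 := congrFun h2 j
  have h4 : N j ≠ 0 ↔ (∑ i, if f i = j then r i else 0) ≠ 0 := by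
    have hPk : P * k ≠ 0 := by positivity
    have hk0 : k₀ ≠ 0 := by positivity
    constructor
    · intro hn h0
      rw [h0, mul_zero] at h3
      exact (mul_ne_zero hPk hn) h3.symm
    · intro hn h0
      rw [h0, mul_zero] at h3
      exact (mul_ne_zero hk0 hn) h3
  rw [Set.mem_setOf_eq, h4]
  constructor
  · rintro ⟨i, hi⟩ h0
    rw [Finset.sum_eq_zero_iff] at h0
    have := h0 i (Finset.mem_univ i)
    rw [if_pos hi] at this
    have := hr i
    omega
  · intro h0
    obtain ⟨i, _, hi⟩ := Finset.exists_ne_zero_of_sum_ne_zero h0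
    refine ⟨i, ?_⟩
    by_contra hne
    exact hi (if_neg hne)

/-- reindex sums over a finset by `Fin` -/
lemma fin_sum {m : ℕ} (w : Fin m → Fin n → ℤ) (T : Finset (Fin m)) :
    ∃ e : Fin T.card ≃ T, ∑ i : Fin T.card, w (e i) = ∑ j ∈ T, w j := by
  refine ⟨T.equivFin.symm, ?_⟩
  rw [Equiv.sum_comp T.equivFin.symm (fun j : T => w j), Finset.sum_coe_sort T w]

lemma sum_supp (N : Fin m → ℕ) (w : Fin m → Fin n → ℤ) :
    ∑ i, N i • w i = ∑ i with N i ≠ 0, N i • w i := by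
  rw [Finset.sum_filter]
  refine Finset.sum_congr rfl fun i _ => ?_
  split_ifs with h
  · rfl
  · push Not at h; rw [h, zero_smul]

lemma semi_of_data (hwG : ∀ i, w i ∈ G)
    (hinj : ∀ N M : Fin m → ℕ, ∑ i, N i • w i = ∑ i, M i • w i → N = M)
    (hgen : ∀ g ∈ G, ∃ k : ℕ, 0 < k ∧ ∃ N : Fin m → ℕ, k • g = ∑ i, N i • w i) :
    SemiFactorial G := by
  have hwe := w_ext hwG hinj hgen
  intro g hg _
  obtain ⟨k₀, hk₀, N, hN⟩ := hgen g hg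
  constructor
  · obtain ⟨e, he⟩ := fin_sum (fun i => N i • w i) (Finset.univ.filter fun i => N i ≠ 0)
    refine ⟨k₀, hk₀, _, fun i => N (e i) • w (e i), ?_, ?_⟩
    · intro i
      have := (Finset.mem_filter.1 (e i).2).2
      exact ext_smul (hwe _) (Nat.pos_of_ne_zero this)
    · rw [hN, sum_supp, ← he]
  · intro k k' hk hk' s t a b ha hb hab hbb ea eb
    choose f hf using fun i => ext_eqv hwG hwe hgen (ha i)
    choose f' hf' using fun i => ext_eqv hwG hwe hgen (hb i)
    have i1 : Function.Injective f := by
      intro i j hij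
      by_contra hne
      exact hab i j hne (eqv_trans (hf i) (hij ▸ eqv_symm (hf j)))
    have i2 : Function.Injective f' := by
      intro i j hij
      by_contra hne
      exact hbb i j hne (eqv_trans (hf' i) (hij ▸ eqv_symm (hf' j)))
    have r1 := supp_eq hinj hk₀ hN hk ea hf
    have r2 := supp_eq hinj hk₀ hN hk' eb hf'
    let σ : Fin s ≃ Fin t := (Equiv.ofInjective f i1).trans
      ((Equiv.setCongr (r1.trans r2.symm)).trans (Equiv.ofInjective f' i2).symm)
    have hσ : ∀ i, f' (σ i) = f i := by
      intro i
      have := Equiv.apply_ofInjective_symm i2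
        ((Equiv.setCongr (r1.trans r2.symm)) (Equiv.ofInjective f i1 i))
      exact this
    refine ⟨σ, fun i => eqv_trans (hf i) ?_⟩
    rw [← hσ]
    exact eqv_symm (hf' _)

lemma mem_cone {g : Fin n → ℤ} (hg : g ∈ G) : toR n g ∈ coneOf G :=
  ⟨1, fun _ => 1, fun _ => g, by simp, by simpa using hg, by simp; rfl⟩

lemma semi_of_simplicial (h : IsSimplicialCone (coneOf G)) : SemiFactorial G := by
  obtain ⟨m, v, hv, hC⟩ := h
  have hco : ∀ g ∈ G, ∃ c : Fin m → ℝ, (∀ i, 0 ≤ c i) ∧ toR n g = ∑ i, c i • v i := by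
    intro g hg
    have := mem_cone hg
    rw [hC] at this
    exact this
  have huniq : ∀ c d : Fin m → ℝ, ∑ i, c i • v i = ∑ i, d i • v i → ∀ i, c i = d i := by
    intro c d hcd i
    have := Fintype.linearIndependent_iff.1 hv (fun i => c i - d i)
      (by simp only [sub_smul, Finset.sum_sub_distrib]; rw [hcd, sub_self]) i
    simpa [sub_eq_zero] using this
  have hw : ∀ i, ∃ w ∈ G, ∃ l : ℝ, 0 < l ∧ toR n w = l • v i := by
    intro i
    have hi : v i ∈ coneOf G := by
      rw [hC]
      refine ⟨Pi.single i 1, ?_, ?_⟩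
      · intro j
        by_cases hj : j = i
        · subst hj; simp
        · simp [hj]
      · rw [Finset.sum_eq_single i]
        · simp
        · intro b _ hb; simp [hb]
        · simp
    obtain ⟨M, c, u, hc, hu, e⟩ := hi
    choose d hd hde using fun l => hco (u l) (hu l)
    have e1 : ∑ j, (Pi.single i 1 : Fin m → ℝ) j • v j = ∑ j, (∑ l, c l * d l j) • v j := by
      trans v i
      · rw [Finset.sum_eq_single i]
        · simp
        · intro b _ hb; simp [hb]
        · simp
      · rw [e]
        simp only [Finset.sum_smul]
        rw [Finset.sum_comm]
        refine Finset.sum_congr rfl fun l _ => ?_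
        change c l • toR n (u l) = _
        rw [hde, Finset.smul_sum]
        simp only [smul_smul]
    have e2 := huniq _ _ e1
    have e3 := e2 i
    simp only [Pi.single_eq_same] at e3
    obtain ⟨l, _, hl⟩ := Finset.exists_ne_zero_of_sum_ne_zero (e3 ▸ one_ne_zero)
    have hcl : c l ≠ 0 := left_ne_zero_of_mul hl
    have hdl : d l i ≠ 0 := right_ne_zero_of_mul hl
    refine ⟨u l, hu l, d l i, lt_of_le_of_ne (hd l i) hdl.symm, ?_⟩
    rw [hde, Finset.sum_eq_single i]
    · intro j _ hj
      have e4 := (e2 j).symm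
      rw [Pi.single_eq_of_ne hj, Finset.sum_eq_zero_iff_of_nonneg
        (fun l _ => mul_nonneg (hc l) (hd l j))] at e4
      have := e4 l (Finset.mem_univ l)
      rw [(mul_eq_zero.1 this).resolve_left hcl, zero_smul]
    · simp
  choose w hwG l hl hwl using hw
  have hlin : LinearIndependent ℝ fun i => toR n (w i) := by
    rw [Fintype.linearIndependent_iff]
    intro c hc i
    simp only [hwl, smul_smul] at hc
    have := Fintype.linearIndependent_iff.1 hv _ hc i
    exact (mul_eq_zero.1 this).resolve_right (hl i).ne'
  refine semi_of_data hwG ?_ ?_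
  · intro N M h
    have h1 : ∑ i, ((N i : ℝ) - M i) • toR n (w i) = 0 := by
      have := congrArg (toR n) h
      simp only [map_sum, map_nsmul] at this
      simp only [sub_smul, Finset.sum_sub_distrib, Nat.cast_smul_eq_nsmul]
      rw [this, sub_self]
    ext i
    have := Fintype.linearIndependent_iff.1 hlin _ h1 i
    rw [sub_eq_zero] at this
    exact_mod_cast this
  · intro g hg
    obtain ⟨c, hc, e⟩ := hco g hg
    refine rat_comb w hlin g (fun i => c i / l i) (fun i => div_nonneg (hc i) (hl i).le) ?_
    rw [e]
    refine Finset.sum_congr rfl fun i _ => ?_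
    rw [hwl, smul_smul, div_mul_cancel₀ _ (hl i).ne']

end back

lemma indep_of_semi {G : AddSubmonoid (Fin n → ℤ)} (hG : SemiFactorial G) {m : ℕ}
    (w : Fin m → Fin n → ℤ) (hw : ∀ i, ExtremalElt G (w i))
    (hne : ∀ i i', i ≠ i' → ¬ EquivExtremal (w i) (w i')) :
    LinearIndependent ℝ fun i => toR n (w i) := by
  apply linInd_of_int
  intro z hz
  -- positive and negative parts
  have hsum : ∑ i, (z i).toNat • w i = ∑ i, (-z i).toNat • w i := by
    rw [← sub_eq_zero, ← hz, ← Finset.sum_sub_distrib]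
    refine Finset.sum_congr rfl fun i _ => ?_
    rw [← natCast_zsmul, ← natCast_zsmul, ← sub_smul]
    congr 1
    omega
  -- a vanishing natural combination is trivial
  have hzero : ∀ N : Fin m → ℕ, ∑ i, N i • w i = 0 → ∀ i, N i = 0 := by
    intro N h i
    by_contra hi
    rw [← Finset.add_sum_erase _ _ (Finset.mem_univ i)] at h
    exact (ext_smul (hw i) (Nat.pos_of_ne_zero hi)).2.2.1
      ⟨_, G.sum_mem fun j _ => G.nsmul_mem (hw j).1 (N j), h⟩
  have hmem : ∑ i, (z i).toNat • w i ∈ G := G.sum_mem fun j _ => G.nsmul_mem (hw j).1 _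
  by_cases h0 : ∑ i, (z i).toNat • w i = 0
  · have a1 := hzero _ h0
    have a2 := hzero _ (hsum ▸ h0)
    ext i
    have := a1 i
    have := a2 i
    simp only [Pi.zero_apply]
    omega
  · exfalso
    have hu := (hG _ hmem h0).2 1 1 one_pos one_pos
    obtain ⟨e, he⟩ := fin_sum (fun i => (z i).toNat • w i)
      (Finset.univ.filter fun i => (z i).toNat ≠ 0)
    obtain ⟨e', he'⟩ := fin_sum (fun i => (-z i).toNat • w i)
      (Finset.univ.filter fun i => (-z i).toNat ≠ 0)
    have p1 : ∀ i, 0 < (z (e i)).toNat := fun i =>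
      Nat.pos_of_ne_zero (Finset.mem_filter.1 (e i).2).2
    have p2 : ∀ i, 0 < (-z (e' i)).toNat := fun i =>
      Nat.pos_of_ne_zero (Finset.mem_filter.1 (e' i).2).2
    have q : ∀ (x : Fin m) (N : ℕ), 0 < N → EquivExtremal (N • w x) (w x) :=
      fun x N hN => ⟨1, N, one_pos, hN, one_smul _ _⟩
    have inj : ∀ (x y : Fin m) (N M : ℕ), 0 < N → 0 < M →
        EquivExtremal (N • w x) (M • w y) → x = y := by
      intro x y N M hN hM h
      by_contra hxy
      exact hne x y hxy (eqv_trans (eqv_symm (q x N hN)) (eqv_trans h (q y M hM)))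
    obtain ⟨σ, hσ⟩ := hu _ _ (fun i => (z (e i)).toNat • w (e i))
      (fun i => (-z (e' i)).toNat • w (e' i))
      (fun i => ext_smul (hw _) (p1 i)) (fun i => ext_smul (hw _) (p2 i))
      (fun i i' hii h => hii (e.injective (Subtype.ext (inj _ _ _ _ (p1 i) (p1 i') h))))
      (fun i i' hii h => hii (e'.injective (Subtype.ext (inj _ _ _ _ (p2 i) (p2 i') h))))
      (by rw [one_smul, sum_supp, ← he]) (by rw [one_smul, hsum, sum_supp, ← he'])
    have : ∃ i, (z i).toNat ≠ 0 := by
      by_contra hcon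
      push Not at hcon
      exact h0 (by simp [hcon])
    obtain ⟨i, hi⟩ := this
    let i0 := e.symm ⟨i, Finset.mem_filter.2 ⟨Finset.mem_univ i, hi⟩⟩
    have h1 := inj _ _ _ _ (p1 i0) (p2 (σ i0)) (hσ i0)
    have h2 := p1 i0
    have h3 := p2 (σ i0)
    rw [← h1] at h3
    omega

lemma simplicial_of_semi {G : AddSubmonoid (Fin n → ℤ)} (hG : SemiFactorial G) :
    IsSimplicialCone (coneOf G) := by
  let Q : ℕ → Prop := fun m => ∃ w : Fin m → Fin n → ℤ, (∀ i, ExtremalElt G (w i)) ∧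
    ∀ i i', i ≠ i' → ¬ EquivExtremal (w i) (w i')
  have hb : ∀ m, Q m → m ≤ n := by
    rintro m ⟨w, hw, hne⟩
    simpa using (indep_of_semi hG w hw hne).fintype_card_le_finrank
  have hQ0 : Q 0 := ⟨fun i => i.elim0, fun i => i.elim0, fun i => i.elim0⟩
  obtain ⟨m, ⟨w, hw, hne⟩, hmax⟩ : ∃ m, Q m ∧ ¬ Q (m + 1) := by
    by_contra hcon
    push Not at hcon
    have : ∀ m, Q m := fun m => Nat.rec hQ0 (fun k hk => hcon k hk) m
    have := hb _ (this (n + 1))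
    omega
  have hex : ∀ a, ExtremalElt G a → ∃ i, EquivExtremal a (w i) := by
    intro a ha
    by_contra hcon
    push Not at hcon
    refine hmax ⟨Fin.cons a w, ?_, ?_⟩
    · intro i
      refine Fin.cases ?_ (fun j => ?_) i
      · simpa using ha
      · simpa using hw j
    · intro i i'
      refine Fin.cases ?_ (fun j => ?_) i <;> refine Fin.cases ?_ (fun j' => ?_) i'
      · simp
      · intro _; simpa using hcon j'
      · intro _ h
        exact hcon j (eqv_symm (by simpa using h))
      · intro h
        simpa using hne j j' (by simpa using h)
  refine ⟨m, fun i => toR n (w i), indep_of_semi hG w hw hne, ?_⟩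
  -- the target cone, as a pointed cone
  let D : Submodule NNReal (Fin n → ℝ) := Submodule.span NNReal (Set.range fun i => toR n (w i))
  have hD : ∀ x, x ∈ D ↔ ∃ c : Fin m → ℝ, (∀ i, 0 ≤ c i) ∧ x = ∑ i, c i • toR n (w i) := by
    intro x
    rw [Submodule.mem_span_range_iff_exists_fun]
    constructor
    · rintro ⟨c, rfl⟩
      exact ⟨fun i => c i, fun i => (c i).2, rfl⟩
    · rintro ⟨c, hc, rfl⟩
      exact ⟨fun i => ⟨c i, hc i⟩, rfl⟩
  have hsm : ∀ (r : ℝ), 0 ≤ r → ∀ x ∈ D, r • x ∈ D := fun r hr x hx =>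
    D.smul_mem (⟨r, hr⟩ : NNReal) hx
  have hdiv : ∀ (k : ℕ), 0 < k → ∀ x, k • x ∈ D → x ∈ D := by
    intro k hk x hx
    have := hsm (k : ℝ)⁻¹ (by positivity) _ hx
    rwa [← Nat.cast_smul_eq_nsmul ℝ, smul_smul, inv_mul_cancel₀ (by positivity), one_smul] at this
  have hext : ∀ a, ExtremalElt G a → toR n a ∈ D := by
    intro a ha
    obtain ⟨i, x, y, hx, hy, e⟩ := hex a ha
    refine hdiv x hx _ ?_
    rw [← map_nsmul, e, map_nsmul]
    exact D.nsmul_mem (Submodule.subset_span ⟨i, rfl⟩) _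
  have hGD : ∀ g ∈ G, toR n g ∈ D := by
    intro g hg
    by_cases h0 : g = 0
    · rw [h0, map_zero]; exact D.zero_mem
    · obtain ⟨k, hk, s, a, ha, e⟩ := (hG g hg h0).1
      refine hdiv k hk _ ?_
      rw [← map_nsmul, e, map_sum]
      exact D.sum_mem fun i _ => hext _ (ha i)
  ext x
  rw [Set.mem_setOf_eq, ← hD]
  constructor
  · rintro ⟨M, c, v, hc, hv, rfl⟩
    exact D.sum_mem fun i _ => hsm _ (hc i) _ (hGD _ (hv i))
  · intro hx
    obtain ⟨c, hc, e⟩ := (hD x).1 hx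
    exact ⟨m, c, w, hc, fun i => (hw i).1, e⟩

end SFS

/-- An additive submonoid `G` of `ℤⁿ` (`n ≥ 1`) is semi-factorial if
and only if the convex cone it generates in `ℝⁿ` is simplicial. -/
theorem semiFactorial_iff_simplicial (n : ℕ) (hn : 1 ≤ n)
    (G : AddSubmonoid (Fin n → ℤ)) :
    SemiFactorial G ↔ IsSimplicialCone (coneOf G) := by
  exact ⟨SFS.simplicial_of_semi, SFS.semi_of_simplicial⟩
end

section
/- Let K be a field and R = K[x,y,z]. Let I be the ideal generated by the monomials x⁴, x³y, x²z, x²y², x²yz, xy³, xy²z, xz³, y³, y²z², yz³, z⁵, and let M = (x, y, z). Then x·y²·z ∉ I·M, while (x·y²·z)² ∈ (I·M)²; consequently x·y²·z satisfies the integral dependence equation T² − (xy²z)² = 0 with (xy²z)² ∈ (I·M)², so x·y²·z lies in the integral closure of I·M and the ideal I·M is not integrally closed. -/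
/-- An element `f` is integral over an ideal `J` if it satisfies an equation
`f^m + c₁ f^(m-1) + ⋯ + c_m = 0` with `m ≥ 1` and `c_i ∈ J^i` for each `i`. -/
def IsIntegralOverIdeal {R : Type} [CommRing R] (J : Ideal R) (f : R) : Prop :=
  ∃ m : ℕ, 0 < m ∧ ∃ c : ℕ → R, (∀ i, 1 ≤ i → i ≤ m → c i ∈ J ^ i) ∧
    f ^ m + ∑ i ∈ Finset.Icc 1 m, c i * f ^ (m - i) = 0

/-- An ideal is integrally closed (complete) if it contains every element integral
over it. -/
def IdealIntegrallyClosed {R : Type} [CommRing R] (J : Ideal R) : Prop :=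
  ∀ f : R, IsIntegralOverIdeal J f → f ∈ J

/-- Tostón's example.  In `R = K[x,y,z]`, with
`I = (x⁴, x³y, x²z, x²y², x²yz, xy³, xy²z, xz³, y³, y²z², yz³, z⁵)` and `M = (x,y,z)`,
one has `xy²z ∉ I·M` while `(xy²z)² ∈ (I·M)²`; consequently `xy²z` is integral over
`I·M` (it satisfies `T² − (xy²z)² = 0` with `(xy²z)² ∈ (I·M)²`), so `I·M` is not
integrally closed. -/
theorem toston_example (K : Type) [Field K]
    (x y z : MvPolynomial (Fin 3) K)
    (hx : x = MvPolynomial.X 0) (hy : y = MvPolynomial.X 1) (hz : z = MvPolynomial.X 2)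
    (I M : Ideal (MvPolynomial (Fin 3) K))
    (hI : I = Ideal.span {x ^ 4, x ^ 3 * y, x ^ 2 * z, x ^ 2 * y ^ 2, x ^ 2 * y * z,
      x * y ^ 3, x * y ^ 2 * z, x * z ^ 3, y ^ 3, y ^ 2 * z ^ 2, y * z ^ 3, z ^ 5})
    (hM : M = Ideal.span {x, y, z}) :
    x * y ^ 2 * z ∉ I * M ∧ (x * y ^ 2 * z) ^ 2 ∈ (I * M) ^ 2 ∧
      IsIntegralOverIdeal (I * M) (x * y ^ 2 * z) ∧
      ¬ IdealIntegrallyClosed (I * M) := by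
  have hxI : x ^ 2 * z ∈ I := by rw [hI]; exact Ideal.subset_span (by simp)
  have hyI : y ^ 3 ∈ I := by rw [hI]; exact Ideal.subset_span (by simp)
  have hyM : y ∈ M := by rw [hM]; exact Ideal.subset_span (by simp)
  have hzM : z ∈ M := by rw [hM]; exact Ideal.subset_span (by simp)
  have h2 : (x * y ^ 2 * z) ^ 2 ∈ (I * M) ^ 2 := by
    have e : (x * y ^ 2 * z) ^ 2 = (x ^ 2 * z * z) * (y ^ 3 * y) := by ring
    rw [e, pow_two (I * M)]
    exact Ideal.mul_mem_mul (Ideal.mul_mem_mul hxI hzM) (Ideal.mul_mem_mul hyI hyM)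
  have h3 : IsIntegralOverIdeal (I * M) (x * y ^ 2 * z) := by
    refine ⟨2, by norm_num, fun i => if i = 2 then -(x * y ^ 2 * z) ^ 2 else 0, ?_, ?_⟩
    · intro i _ _
      by_cases h : i = 2
      · subst h
        simpa using h2
      · simp [h]
    · simp [Finset.sum_Icc_succ_top]
  have h1 : x * y ^ 2 * z ∉ I * M := by
    intro hmem
    have key : ∃ J : Ideal (MvPolynomial (Fin 3) K),
        J = Ideal.span {x ^ 2, y ^ 3, z ^ 2} := ⟨_, rfl⟩
    obtain ⟨J, hJ⟩ := key
    have jx : x ^ 2 ∈ J := by rw [hJ]; exact Ideal.subset_span (by simp)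
    have jy : y ^ 3 ∈ J := by rw [hJ]; exact Ideal.subset_span (by simp)
    have jz : z ^ 2 ∈ J := by rw [hJ]; exact Ideal.subset_span (by simp)
    have hle : I * M ≤ J := by
      rw [hI, hM, Ideal.span_mul_span', Ideal.span_le]
      rintro _ ⟨a, ha, b, hb, rfl⟩
      simp only [Set.mem_insert_iff, Set.mem_singleton_iff] at ha hb
      show a * b ∈ J
      rcases ha with rfl | rfl | rfl | rfl | rfl | rfl | rfl | rfl | rfl | rfl | rfl | rfl
      · exact J.mul_mem_right _ (J.mem_of_dvd ⟨x ^ 2, by ring⟩ jx)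
      · exact J.mul_mem_right _ (J.mem_of_dvd ⟨x * y, by ring⟩ jx)
      · exact J.mul_mem_right _ (J.mem_of_dvd ⟨z, by ring⟩ jx)
      · exact J.mul_mem_right _ (J.mem_of_dvd ⟨y ^ 2, by ring⟩ jx)
      · exact J.mul_mem_right _ (J.mem_of_dvd ⟨y * z, by ring⟩ jx)
      · exact J.mul_mem_right _ (J.mem_of_dvd ⟨x, by ring⟩ jy)
      · rcases hb with hb | hb | hb
        · rw [hb]; exact J.mem_of_dvd ⟨y ^ 2 * z, by ring⟩ jx
        · rw [hb]; exact J.mem_of_dvd ⟨x * z, by ring⟩ jy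
        · rw [hb]; exact J.mem_of_dvd ⟨x * y ^ 2, by ring⟩ jz
      · exact J.mul_mem_right _ (J.mem_of_dvd ⟨x * z, by ring⟩ jz)
      · exact J.mul_mem_right _ jy
      · exact J.mul_mem_right _ (J.mem_of_dvd ⟨y ^ 2, by ring⟩ jz)
      · exact J.mul_mem_right _ (J.mem_of_dvd ⟨y * z, by ring⟩ jz)
      · exact J.mul_mem_right _ (J.mem_of_dvd ⟨z ^ 3, by ring⟩ jz)
    have hJ2 : J = Ideal.span ((fun s => MvPolynomial.monomial s (1 : K)) ''
        {Finsupp.single 0 2, Finsupp.single 1 3, Finsupp.single 2 2}) := by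
      rw [hJ, hx, hy, hz]
      simp [Set.image_insert_eq, MvPolynomial.X_pow_eq_monomial]
    have hm := hle hmem
    have e : x * y ^ 2 * z = MvPolynomial.monomial
        (Finsupp.single 0 1 + Finsupp.single 1 2 + Finsupp.single 2 1) (1 : K) := by
      rw [hx, hy, hz, MvPolynomial.X_pow_eq_monomial, MvPolynomial.X, MvPolynomial.X,
        MvPolynomial.monomial_mul, MvPolynomial.monomial_mul]
      simp
    rw [hJ2, e, MvPolynomial.mem_ideal_span_monomial_image] at hm
    obtain ⟨s, hs, hle⟩ := hm (Finsupp.single 0 1 + Finsupp.single 1 2 + Finsupp.single 2 1)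
      (by classical simp [MvPolynomial.support_monomial])
    simp only [Set.mem_insert_iff, Set.mem_singleton_iff] at hs
    rcases hs with rfl | rfl | rfl
    · have := hle 0
      simp [Finsupp.single_apply] at this
    · have := hle 1
      simp [Finsupp.single_apply] at this
    · have := hle 2
      simp [Finsupp.single_apply] at this
  exact ⟨h1, h2, h3, fun h => h1 (h _ h3)⟩
end
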